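/- arXiv:1110.1144 — 4 statements merged into one kernel-verified Lean document; each statement's English description precedes it below -/
import Mathlib

section
/- For all sufficiently large n, every simple graph on n vertices in which no two cycles have the same length has fewer than n + 1.98·√n edges. -/
theorem random_cover {α : Type*} [DecidableEq α] (p : ℝ) (hp0 : 0 ≤ p) (hp1 : p ≤ 1)
    (w : Finset α → ℝ) (V : Finset α) : ∀ F : Finset (Finset α),
    ∃ S : Finset α, S ⊆ V ∧ (S.card : ℝ) + ∑ e ∈ F with Disjoint e S, w e ≤
      p * V.card + ∑ e ∈ F, w e * (1 - p) ^ (e ∩ V).card := by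
  induction V using Finset.induction_on with
  | empty => intro F; exact ⟨∅, by simp⟩
  | insert v V hv ih =>
    intro F
    obtain ⟨S₁, hS₁, h₁⟩ := ih F
    obtain ⟨S₂, hS₂, h₂⟩ := ih (F.filter (fun e => v ∉ e))
    have hsplit : ∑ e ∈ F, w e * (1 - p) ^ (e ∩ insert v V).card =
        (1 - p) * ∑ e ∈ F, w e * (1 - p) ^ (e ∩ V).card +
        p * ∑ e ∈ F with v ∉ e, w e * (1 - p) ^ (e ∩ V).card := by
      rw [Finset.sum_filter, Finset.mul_sum, Finset.mul_sum, ← Finset.sum_add_distrib]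
      refine Finset.sum_congr rfl fun e _ => ?_
      by_cases h : v ∈ e
      · rw [Finset.inter_insert_of_mem h, Finset.card_insert_of_notMem (by simp [hv])]
        simp [h]; ring
      · rw [Finset.inter_insert_of_notMem h]
        simp [h]; ring
    by_cases hc : p * V.card + ∑ e ∈ F, w e * (1 - p) ^ (e ∩ V).card ≤
        1 + p * V.card + ∑ e ∈ F with v ∉ e, w e * (1 - p) ^ (e ∩ V).card
    · refine ⟨S₁, hS₁.trans (Finset.subset_insert _ _), ?_⟩
      rw [hsplit, Finset.card_insert_of_notMem hv]
      push_cast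
      nlinarith
    · refine ⟨insert v S₂, Finset.insert_subset_insert _ hS₂, ?_⟩
      rw [hsplit, Finset.card_insert_of_notMem hv,
        Finset.card_insert_of_notMem (fun h => hv (hS₂ h))]
      have : (F.filter (fun e => Disjoint e (insert v S₂))) =
          (F.filter (fun e => v ∉ e)).filter (fun e => Disjoint e S₂) := by
        ext e; simp [Finset.disjoint_insert_right, and_assoc]
      rw [this]
      push_cast
      nlinarith

theorem pair_cover {α : Type*} [DecidableEq α] (k : ℕ) : ∀ U : Finset (Finset α), U.card ≤ k →
    (∀ e ∈ U, e.Nonempty) →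
    ∃ (T : Finset α) (D : Finset (Finset α)), D ⊆ U ∧
      (D : Set (Finset α)).PairwiseDisjoint id ∧
      (∀ e ∈ U, ¬ Disjoint e T) ∧ 2 * T.card ≤ U.card + D.card := by
  induction k with
  | zero =>
    intro U hU _
    have : U = ∅ := by simpa using hU
    subst this
    exact ⟨∅, ∅, by simp⟩
  | succ k ih =>
    intro U hU hne
    by_cases hd : (U : Set (Finset α)).PairwiseDisjoint id
    · refine ⟨U.attach.image (fun e => (hne e.1 e.2).choose), U, subset_rfl, hd, ?_, ?_⟩
      · intro e he h
        exact Finset.disjoint_left.1 h (hne e he).choose_spec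
          (Finset.mem_image.2 ⟨⟨e, he⟩, Finset.mem_attach _ _, rfl⟩)
      · have := Finset.card_image_le (s := U.attach) (f := fun e => (hne e.1 e.2).choose)
        rw [Finset.card_attach] at this
        omega
    · simp only [Set.PairwiseDisjoint, Set.Pairwise, not_forall] at hd
      obtain ⟨a, ha, b, hb, hab, hd⟩ := hd
      simp only [Function.onFun, id] at hd
      obtain ⟨x, hxa, hxb⟩ := Finset.not_disjoint_iff.1 hd
      have hb' : b ∈ U.erase a := Finset.mem_erase.2 ⟨hab.symm, hb⟩
      have c1 := Finset.card_erase_add_one (Finset.mem_coe.1 ha)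
      have c2 := Finset.card_erase_add_one hb'
      obtain ⟨T, D, hD, hDd, hT, hc⟩ := ih ((U.erase a).erase b) (by omega)
        (fun e he => hne e (Finset.mem_of_mem_erase (Finset.mem_of_mem_erase he)))
      refine ⟨insert x T, D, ?_, hDd, ?_, ?_⟩
      · exact hD.trans ((Finset.erase_subset _ _).trans (Finset.erase_subset _ _))
      · intro e he h
        rw [Finset.disjoint_insert_right] at h
        by_cases hea : e = a
        · subst hea; exact h.1 hxa
        by_cases heb : e = b
        · subst heb; exact h.1 hxb
        exact hT e (by simp [hea, heb, he]) h.2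
      · have := Finset.card_insert_le x T
        omega

/-- deterministic cover bound -/
theorem cover_bound {α : Type*} [Fintype α] [DecidableEq α] (p : ℝ) (hp0 : 0 < p) (hp1 : p ≤ 1)
    (K : ℕ) (hK : 0 < K) (E : Finset α) (F : Finset (Finset α)) (hne : ∀ e ∈ F, e.Nonempty)
    (hE : ∀ e ∈ F, e ⊆ E)
    (hinj : Set.InjOn Finset.card (F : Set (Finset α))) :
    ∃ T : Finset α, (∀ e ∈ F, ¬ Disjoint e T) ∧
      (T.card : ℝ) ≤ p * E.card + E.card / (2 * K) + 1 / (2 * p) +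
        1 / 2 * (1 / p - (1 - p) * (1 - (1 - p) ^ K) / (K * p ^ 2)) := by
  have hKr : (0 : ℝ) < K := by exact_mod_cast hK
  set g : ℕ → ℝ := fun i => 1 / 2 + 1 / 2 * max 0 (1 - (i : ℝ) / K) with hg
  have hg0 : ∀ i, 0 ≤ g i := fun i => by simp only [hg]; positivity
  obtain ⟨S, hS, hS2⟩ := random_cover p hp0.le hp1 (fun e => g e.card) E F
  set U := F.filter (fun e => Disjoint e S) with hU
  obtain ⟨T, D, hDU, hD, hT, hTc⟩ := pair_cover U.card U le_rfl
    (fun e he => hne e (Finset.mem_filter.1 he).1)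
  have hq0 : 0 ≤ 1 - p := by linarith
  refine ⟨S ∪ T, ?_, ?_⟩
  · intro e he h
    rw [Finset.disjoint_union_right] at h
    exact hT e (by simp [hU, he, h.1]) h.2
  -- disjoint part
  have hDsum : ∑ e ∈ D, (e.card : ℝ) ≤ E.card := by
    have h1 : (D.biUnion id).card = ∑ e ∈ D, e.card := Finset.card_biUnion hD
    have h2 : (D.biUnion id).card ≤ E.card := Finset.card_le_card (by
      intro x hx
      obtain ⟨e, he, hx⟩ := Finset.mem_biUnion.1 hx
      exact hE e (Finset.mem_filter.1 (hDU he)).1 hx)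
    rw [h1] at h2
    exact_mod_cast h2
  have hDc : (D.card : ℝ) ≤ E.card / K + ∑ e ∈ U, max 0 (1 - (e.card : ℝ) / K) := by
    calc (D.card : ℝ) = ∑ e ∈ D, (1 : ℝ) := by simp
      _ ≤ ∑ e ∈ D, ((e.card : ℝ) / K + max 0 (1 - (e.card : ℝ) / K)) :=
          Finset.sum_le_sum fun e _ => by linarith [le_max_right 0 (1 - (e.card : ℝ) / K)]
      _ = (∑ e ∈ D, (e.card : ℝ)) / K + ∑ e ∈ D, max 0 (1 - (e.card : ℝ) / K) := by
          rw [Finset.sum_add_distrib, Finset.sum_div]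
      _ ≤ _ := by
          gcongr
  have hTr : 2 * (T.card : ℝ) ≤ U.card + D.card := by exact_mod_cast hTc
  have hUg : ∑ e ∈ U, g e.card = U.card / 2 + (∑ e ∈ U, max 0 (1 - (e.card : ℝ) / K)) / 2 := by
    simp only [hg, Finset.sum_add_distrib, ← Finset.mul_sum]
    simp; ring
  have hcard : ((S ∪ T).card : ℝ) ≤ S.card + T.card := by exact_mod_cast Finset.card_union_le S T
  -- sum over sizes
  have hsum : ∑ e ∈ F, g e.card * (1 - p) ^ (e ∩ E).card ≤
      ∑ i ∈ Finset.range (E.card + 1 + K), g i * (1 - p) ^ i := by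
    have : ∑ e ∈ F, g e.card * (1 - p) ^ (e ∩ E).card =
        ∑ i ∈ F.image Finset.card, g i * (1 - p) ^ i := by
      rw [Finset.sum_image hinj]
      refine Finset.sum_congr rfl fun e he => ?_
      rw [Finset.inter_eq_left.2 (hE e he)]
    rw [this]
    refine Finset.sum_le_sum_of_subset_of_nonneg ?_ fun i _ _ =>
      mul_nonneg (hg0 i) (pow_nonneg hq0 i)
    intro i hi
    obtain ⟨e, he, rfl⟩ := Finset.mem_image.1 hi
    have := Finset.card_le_card (hE e he)
    simp; omega
  have hgeom : ∀ M, ∑ i ∈ Finset.range M, (1 - p) ^ i ≤ 1 / p := by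
    intro M
    have : p * ∑ i ∈ Finset.range M, (1 - p) ^ i = 1 - (1 - p) ^ M := by
      have := geom_sum_mul_neg (1 - p) M
      linarith
    rw [le_div_iff₀ hp0]
    linarith [pow_nonneg hq0 M]
  have hlin : ∀ M : ℕ, ∑ i ∈ Finset.range M, (1 - (i : ℝ) / K) * (1 - p) ^ i =
      1 / p - (1 - p) ^ M / p - ((1 - p) * (1 - (1 - p) ^ M) / p ^ 2 - M * (1 - p) ^ M / p) / K := by
    intro M
    induction M with
    | zero => simp
    | succ M ih =>
      rw [Finset.sum_range_succ, ih]
      push_cast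
      field_simp
      ring
  have hmax : ∑ i ∈ Finset.range (E.card + 1 + K), max 0 (1 - (i : ℝ) / K) * (1 - p) ^ i =
      ∑ i ∈ Finset.range K, (1 - (i : ℝ) / K) * (1 - p) ^ i := by
    rw [← Finset.sum_subset (Finset.range_mono (show K ≤ E.card + 1 + K by omega))]
    · refine Finset.sum_congr rfl fun i hi => ?_
      rw [max_eq_right]
      have : (i : ℝ) < K := by exact_mod_cast Finset.mem_range.1 hi
      rw [sub_nonneg, div_le_one hKr]; exact this.le
    · intro i _ hi
      have : (K : ℝ) ≤ i := by simpa using hi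
      rw [max_eq_left, zero_mul]
      rw [sub_nonpos, one_le_div hKr]; exact this
  have hfin : ∑ i ∈ Finset.range (E.card + 1 + K), g i * (1 - p) ^ i ≤
      1 / 2 * (1 / p) + 1 / 2 * (1 / p - (1 - p) * (1 - (1 - p) ^ K) / (K * p ^ 2)) := by
    have h1 : ∑ i ∈ Finset.range (E.card + 1 + K), g i * (1 - p) ^ i =
       1 / 2 * ∑ i ∈ Finset.range (E.card + 1 + K), (1 - p) ^ i +
       1 / 2 * ∑ i ∈ Finset.range (E.card + 1 + K), max 0 (1 - (i : ℝ) / K) * (1 - p) ^ i := by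
      rw [Finset.mul_sum, Finset.mul_sum, ← Finset.sum_add_distrib]
      refine Finset.sum_congr rfl fun i _ => ?_
      simp only [hg]; ring
    rw [h1, hmax, hlin K]
    have h2 := hgeom (E.card + 1 + K)
    have h3 : 1 / p - (1 - p) ^ K / p - ((1 - p) * (1 - (1 - p) ^ K) / p ^ 2 - K * (1 - p) ^ K / p) / K
      = 1 / p - (1 - p) * (1 - (1 - p) ^ K) / (K * p ^ 2) := by
      field_simp
      ring
    rw [h3]
    linarith
  have e1 : (E.card : ℝ) / (2 * K) = E.card / K / 2 := by field_simp
  have e2 : 1 / (2 * p) = 1 / 2 * (1 / p) := by field_simp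
  rw [e1, e2]
  linarith

theorem numeric_bound (s : ℝ) (hs : 2000 ≤ s) (K : ℕ) (hK1 : 2.775 * s ≤ K)
    (hK2 : (K : ℝ) ≤ 2.775 * s + 1) :
    0.81 / s * s ^ 2 + s ^ 2 / (2 * K) + 1 / (2 * (0.81 / s)) +
      1 / 2 * (1 / (0.81 / s) - (1 - 0.81 / s) * (1 - (1 - 0.81 / s) ^ K) / (K * (0.81 / s) ^ 2))
      ≤ 1.9795 * s := by
  have hs0 : 0 < s := by linarith
  have hK0 : (0 : ℝ) < K := by linarith
  have hp1 : 0.81 / s ≤ 0.81 / 2000 := by gcongr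
  have hp0 : 0 < 0.81 / s := by positivity
  have hq : (1 - 0.81 / s) ^ K ≤ 0.106 := by
    have h1 : 1 - 0.81 / s ≤ Real.exp (-(0.81 / s)) := Real.one_sub_le_exp_neg _
    have h2 : (1 - 0.81 / s) ^ K ≤ Real.exp (-(0.81 / s)) ^ K :=
      pow_le_pow_left₀ (by linarith) h1 K
    rw [← Real.exp_nat_mul] at h2
    have h3 : (K : ℝ) * -(0.81 / s) ≤ -2.24775 := by
      have : 2.775 * s * (0.81 / s) ≤ K * (0.81 / s) := by gcongr
      have e : 2.775 * s * (0.81 / s) = 2.24775 := by field_simp; norm_num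
      linarith
    have h4 : Real.exp (-2.24775) ≤ 0.106 := by
      rw [Real.exp_neg]
      have h5 : Real.exp 2.24775 = Real.exp 1 * Real.exp 1 * Real.exp 0.24775 := by
        rw [← Real.exp_add, ← Real.exp_add]; norm_num
      have h6 := Real.quadratic_le_exp_of_nonneg (x := 0.24775) (by norm_num)
      have h7 := Real.exp_one_gt_d9
      have h8 : (2.7182818283 : ℝ) * 2.7182818283 * (1 + 0.24775 + 0.24775 ^ 2 / 2) ≤
          Real.exp 2.24775 := by
        rw [h5]; gcongr
      rw [inv_le_comm₀ (Real.exp_pos _) (by norm_num)]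
      refine le_trans ?_ h8
      norm_num
    exact h2.trans ((Real.exp_le_exp.2 h3).trans h4)
  have t1 : 0.81 / s * s ^ 2 = 0.81 * s := by field_simp
  have t2 : s ^ 2 / (2 * K) ≤ s / 5.55 := by
    rw [div_le_div_iff₀ (by positivity) (by norm_num)]
    nlinarith
  have t3 : 1 / (0.81 / s) = s / 0.81 := by field_simp
  have t3' : 1 / (2 * (0.81 / s)) = s / 1.62 := by field_simp; norm_num
  have t4 : 0.4905 * s ≤
      (1 - 0.81 / s) * (1 - (1 - 0.81 / s) ^ K) / (K * (0.81 / s) ^ 2) := by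
    have e : (K : ℝ) * (0.81 / s) ^ 2 = 0.6561 * K / s ^ 2 := by field_simp; norm_num
    rw [e, le_div_iff₀ (by positivity)]
    have h1 : (1 - 0.81 / 2000) * (1 - 0.106) ≤ (1 - 0.81 / s) * (1 - (1 - 0.81 / s) ^ K) := by
      gcongr
      linarith
    refine le_trans ?_ h1
    have h2 : 0.4905 * s * (0.6561 * K / s ^ 2) = 0.4905 * 0.6561 * (K / s) := by field_simp
    rw [h2]
    have h3 : (K : ℝ) / s ≤ 2.7755 := by
      rw [div_le_iff₀ hs0]; linarith
    nlinarith
  rw [t1, t3, t3']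
  generalize (1 - 0.81 / s) * (1 - (1 - 0.81 / s) ^ K) / (K * (0.81 / s) ^ 2) = Y at t4 ⊢
  generalize s ^ 2 / (2 * (K : ℝ)) = Z at t2 ⊢
  have u1 : s / 5.55 ≤ 0.180181 * s := by
    rw [div_le_iff₀ (by norm_num)]; nlinarith
  have u2 : s / 1.62 ≤ 0.617284 * s := by
    rw [div_le_iff₀ (by norm_num)]; nlinarith
  have u3 : s / 0.81 ≤ 1.234568 * s := by
    rw [div_le_iff₀ (by norm_num)]; nlinarith
  linarith

theorem acyclic_card {n : ℕ} (hn : 0 < n) (H : SimpleGraph (Fin n)) (hH : H.IsAcyclic) :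
    H.edgeSet.ncard + 1 ≤ n := by
  classical
  have : Nonempty (Fin n) := ⟨⟨0, hn⟩⟩
  obtain ⟨T, hHT, -, hT⟩ :=
    (SimpleGraph.connected_top (V := Fin n)).exists_isTree_le_of_le_of_isAcyclic le_top hH
  have h1 := hT.card_edgeFinset
  rw [Fintype.card_fin] at h1
  have h2 : H.edgeSet.ncard ≤ T.edgeSet.ncard :=
    Set.ncard_le_ncard (SimpleGraph.edgeSet_mono hHT) (Set.toFinite _)
  have h3 : T.edgeSet.ncard = T.edgeFinset.card := by
    rw [← SimpleGraph.coe_edgeFinset, Set.ncard_coe_finset]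
  omega

/-- For all sufficiently large n, every simple graph on n vertices
in which no two cycles have the same length has fewer than n + 1.98·√n edges. -/
theorem stmt_1 :
    ∃ N : ℕ, ∀ n : ℕ, N ≤ n → ∀ G : SimpleGraph (Fin n),
      (∀ (u v : Fin n) (c₁ : G.Walk u u) (c₂ : G.Walk v v),
        c₁.IsCycle → c₂.IsCycle → c₁.length = c₂.length →
          c₁.edges.toFinset = c₂.edges.toFinset) →
      (G.edgeSet.ncard : ℝ) < n + 1.98 * Real.sqrt n := by
  classical
  refine ⟨16000000, fun n hn G hG => ?_⟩
  by_contra hcon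
  rw [not_lt] at hcon
  set m := G.edgeSet.ncard with hm
  have hmE : G.edgeFinset.card = m := by
    rw [hm, ← SimpleGraph.coe_edgeFinset, Set.ncard_coe_finset]
  set r := Real.sqrt n with hr
  set s := Real.sqrt m with hs
  have hr2 : r ^ 2 = n := Real.sq_sqrt (Nat.cast_nonneg n)
  have hs2 : s ^ 2 = m := Real.sq_sqrt (Nat.cast_nonneg m)
  have hnr : (16000000 : ℝ) ≤ n := by exact_mod_cast hn
  have hr4 : 4000 ≤ r := Real.le_sqrt_of_sq_le (by linarith)
  have hs4 : 4000 ≤ s := Real.le_sqrt_of_sq_le (by linarith)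
  -- the family of cycles
  set F : Finset (Finset (Sym2 (Fin n))) := Finset.univ.filter (fun e =>
    ∃ (u : Fin n) (c : G.Walk u u), c.IsCycle ∧ c.edges.toFinset = e) with hF
  have hcard : ∀ (u : Fin n) (c : G.Walk u u), c.IsCycle → c.edges.toFinset.card = c.length := by
    intro u c hc
    rw [List.toFinset_card_of_nodup hc.edges_nodup, SimpleGraph.Walk.length_edges]
  obtain ⟨T, hT, hTc⟩ := cover_bound (0.81 / s) (by positivity)
    (by rw [div_le_one (by linarith)]; linarith) ⌈2.775 * s⌉₊
    (Nat.ceil_pos.2 (by linarith)) G.edgeFinset F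
    (by
      intro e he
      obtain ⟨u, c, hc, rfl⟩ := (Finset.mem_filter.1 he).2
      rw [← Finset.card_pos, hcard u c hc]
      have := hc.three_le_length
      omega)
    (by
      intro e he
      obtain ⟨u, c, hc, rfl⟩ := (Finset.mem_filter.1 he).2
      intro x hx
      rw [SimpleGraph.mem_edgeFinset]
      exact c.edges_subset_edgeSet (List.mem_toFinset.1 hx))
    (by
      intro e he e' he' h
      obtain ⟨u, c, hc, rfl⟩ := (Finset.mem_filter.1 he).2
      obtain ⟨u', c', hc', rfl⟩ := (Finset.mem_filter.1 he').2
      refine hG u u' c c' hc hc' ?_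
      rw [← hcard u c hc, ← hcard u' c' hc']
      exact h)
  have hnum := numeric_bound s (by linarith) ⌈2.775 * s⌉₊ (Nat.le_ceil _)
    (Nat.ceil_lt_add_one (by linarith)).le
  rw [hs2] at hnum
  rw [hmE] at hTc
  have hTs := hTc.trans hnum
  -- remove the cover
  have hac : (G.deleteEdges (T : Set (Sym2 (Fin n)))).IsAcyclic := by
    intro u c hc
    have hle : G.deleteEdges (T : Set (Sym2 (Fin n))) ≤ G := G.deleteEdges_le _
    refine hT c.edges.toFinset ?_ ?_
    · refine Finset.mem_filter.2 ⟨Finset.mem_univ _, u, c.mapLe hle, hc.mapLe hle, ?_⟩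
      rw [SimpleGraph.Walk.edges_mapLe_eq_edges]
    · rw [Finset.disjoint_left]
      intro x hx hxT
      have := c.edges_subset_edgeSet (List.mem_toFinset.1 hx)
      rw [SimpleGraph.edgeSet_deleteEdges] at this
      exact this.2 hxT
  have h1 := acyclic_card (by omega) _ hac
  rw [SimpleGraph.edgeSet_deleteEdges] at h1
  have h2 := Set.ncard_le_ncard_sdiff_add_ncard G.edgeSet (T : Set (Sym2 (Fin n)))
    (Set.toFinite _)
  rw [Set.ncard_coe_finset] at h2
  have h3 : (m : ℝ) + 1 ≤ n + T.card := by
    have : m + 1 ≤ n + T.card := by omega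
    exact_mod_cast this
  have h4 : s ≤ r + 0.98975 := by
    have : s - 0.98975 ≤ r := abs_le_of_sq_le_sq' (by nlinarith) (by linarith) |>.2
    linarith
  nlinarith
end

section
/- For every integer n ≥ 3, every 2-connected simple graph on n vertices in which no two cycles have the same length has at most n + ⌊(√(8n−15)−3)/2⌋ edges. -/
section aux
open Classical

/-- Reduced echelon basis of a subspace. -/
lemma aux_echelon {E : Type} [Fintype E] (W : Submodule (ZMod 2) (E → ZMod 2)) :
    ∃ (κ : Type) (_ : Fintype κ) (e : κ → E) (C : κ → E → ZMod 2),
      Fintype.card κ = Module.finrank (ZMod 2) W ∧ (∀ k, C k ∈ W) ∧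
      (∀ k l, C k (e l) = if k = l then 1 else 0) ∧
      ∀ w ∈ W, w = ∑ k, w (e k) • C k := by
  let f : E → Module.Dual (ZMod 2) W := fun x => (LinearMap.proj x).comp W.subtype
  obtain ⟨κ, a, ha, hsp, hli⟩ := exists_linearIndependent' (ZMod 2) f
  have : Fintype κ := Fintype.ofInjective a ha
  let φ : W →ₗ[ZMod 2] (κ → ZMod 2) := LinearMap.pi (fun k => f (a k))
  have hinj : Function.Injective φ := by
    rw [injective_iff_map_eq_zero]
    intro w hw
    have h1 : ∀ g ∈ Submodule.span (ZMod 2) (Set.range f), g w = 0 := by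
      rw [← hsp]
      intro g hg
      induction hg using Submodule.span_induction with
      | mem x hx => obtain ⟨k, rfl⟩ := hx; exact congrFun hw k
      | zero => rfl
      | add x y _ _ hx hy => simp [hx, hy]
      | smul c x _ hx => simp [hx]
    ext x
    exact h1 _ (Submodule.subset_span ⟨x, rfl⟩)
  have hle : Fintype.card κ ≤ Module.finrank (ZMod 2) W := by
    have := hli.fintype_card_le_finrank
    rwa [Subspace.dual_finrank_eq] at this
  have hge : Module.finrank (ZMod 2) W ≤ Fintype.card κ := by
    have := LinearMap.finrank_le_finrank_of_injective hinj
    simpa using this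
  have hcard : Fintype.card κ = Module.finrank (ZMod 2) W := le_antisymm hle hge
  have hsurj : Function.Surjective φ := by
    rw [← LinearMap.injective_iff_surjective_of_finrank_eq_finrank (by simp [hcard])]
    exact hinj
  choose D hD using fun k : κ => hsurj (Pi.single k 1)
  have hDD : ∀ k l, (D k : E → ZMod 2) (a l) = if k = l then 1 else 0 := by
    intro k l
    have := congrFun (hD k) l
    rw [Pi.single_apply] at this
    simp only [eq_comm (a := k)]
    exact this
  refine ⟨κ, this, a, fun k => D k, hcard, fun k => (D k).2, hDD, ?_⟩
  intro w hw
  have : (⟨w, hw⟩ : W) = ∑ k, w (a k) • D k := by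
    apply hinj
    ext l
    change w (a l) = ((∑ k, w (a k) • D k : W) : E → ZMod 2) (a l)
    simp [Finset.sum_apply, hDD]
  have := congrArg (Subtype.val) this
  simpa using this

/-- Geodesics in a connected graph. -/
lemma aux_geo {κ : Type} (H : SimpleGraph κ) (hH : H.Preconnected) (i j : κ) :
    ∃ (D : ℕ) (g : ℕ → κ), g 0 = i ∧ g D = j ∧ H.dist i j = D ∧
      (∀ a < D, H.Adj (g a) (g (a+1))) ∧
      (∀ a b, a ≤ b → b ≤ D → H.dist (g a) (g b) = b - a) := by
  obtain ⟨p, hp⟩ := (hH i j).exists_walk_length_eq_dist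
  have : Nonempty κ := ⟨i⟩
  have hHc : H.Connected := ⟨hH⟩
  have hub : ∀ a k, a + k ≤ p.length → H.dist (p.getVert a) (p.getVert (a+k)) ≤ k := by
    intro a k
    induction k with
    | zero => simp
    | succ k ih =>
      intro h
      have h1 := ih (by omega)
      have h2 := p.adj_getVert_succ (i := a + k) (by omega)
      have := (SimpleGraph.Connected.dist_triangle (G := H) (u := p.getVert a)
        (v := p.getVert (a+k)) (w := p.getVert (a+k+1)) hHc)
      rw [SimpleGraph.dist_eq_one_iff_adj.2 h2] at this
      rw [← add_assoc]; omega
  have tri : ∀ u v w, H.dist u w ≤ H.dist u v + H.dist v w := fun u v w =>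
    SimpleGraph.Connected.dist_triangle (G := H) hHc
  refine ⟨p.length, p.getVert, by simp, by simp, hp.symm, fun a ha => p.adj_getVert_succ ha, ?_⟩
  intro a b hab hb
  have h1 := hub a (b-a) (by omega)
  have h2 := hub 0 a (by omega)
  have h3 := hub b (p.length - b) (by omega)
  rw [Nat.add_sub_cancel' hab] at h1
  rw [Nat.add_sub_cancel' hb] at h3
  simp only [zero_add, SimpleGraph.Walk.getVert_zero, SimpleGraph.Walk.getVert_length] at h2 h3
  have t1 := tri i (p.getVert a) j
  have t2 := tri (p.getVert a) (p.getVert b) j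
  omega

/-- The intersection graph of fundamental circuits. -/
def auxH {E κ : Type} (C : κ → E → ZMod 2) : SimpleGraph κ where
  Adj i j := i ≠ j ∧ ∃ x, C i x ≠ 0 ∧ C j x ≠ 0
  symm := ⟨fun _ _ h => ⟨h.1.symm, h.2.imp fun _ hx => ⟨hx.2, hx.1⟩⟩⟩
  loopless := ⟨fun _ h => h.1 rfl⟩

lemma zmod2_cases (a : ZMod 2) : a = 0 ∨ a = 1 := by revert a; decide

/-- Many minimal vectors. -/
lemma aux_min {E κ : Type} [Fintype E] [Fintype κ] (W : Submodule (ZMod 2) (E → ZMod 2))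
    (e : κ → E) (C : κ → E → ZMod 2) (hCW : ∀ k, C k ∈ W)
    (hC : ∀ k l, C k (e l) = if k = l then 1 else 0)
    (hexp : ∀ w ∈ W, w = ∑ k, w (e k) • C k)
    (hH : (auxH C).Preconnected) :
    ∃ F : Sym2 κ → (E → ZMod 2), Function.Injective F ∧ ∀ s, F s ∈ W ∧ F s ≠ 0 ∧
      ∀ w ∈ W, w ≠ 0 → (∀ x, w x ≠ 0 → F s x ≠ 0) → w = F s := by
  have key : ∀ s : Sym2 κ, ∃ (D : ℕ) (g : ℕ → κ), s = s(g 0, g D) ∧ 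
      (∀ a < D, (auxH C).Adj (g a) (g (a+1))) ∧
      (∀ a b, a ≤ b → b ≤ D → (auxH C).dist (g a) (g b) = b - a) := by
    intro s
    induction s using Sym2.ind with
    | _ i j =>
      obtain ⟨D, g, h0, hD, -, h1, h2⟩ := aux_geo (auxH C) hH i j
      exact ⟨D, g, by rw [h0, hD], h1, h2⟩
  choose D g hs hadj hdist using key
  let P : Sym2 κ → Finset κ := fun s => (Finset.range (D s + 1)).image (g s)
  let F : Sym2 κ → (E → ZMod 2) := fun s => ∑ k ∈ P s, C k
  have hmemP : ∀ s k, k ∈ P s ↔ ∃ a ≤ D s, g s a = k := by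
    intro s k; simp [P]
  have hFe : ∀ s k, F s (e k) = if k ∈ P s then 1 else 0 := by
    intro s k
    simp [F, Finset.sum_apply, hC]
  have hP : ∀ s t, P s = P t → D s ≤ D t ∧ (D s = D t → s = t) := by
    intro s t h
    obtain ⟨a, ha, hga⟩ := (hmemP t (g s 0)).1 (h ▸ (hmemP s _).2 ⟨0, by omega, rfl⟩)
    obtain ⟨b, hb, hgb⟩ := (hmemP t (g s (D s))).1 (h ▸ (hmemP s _).2 ⟨D s, by omega, rfl⟩)
    have h1 := hdist s 0 (D s) (by omega) le_rfl
    rw [← hga, ← hgb] at h1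
    rcases le_total a b with hab | hab
    · rw [hdist t a b hab hb] at h1
      refine ⟨by omega, fun hD => ?_⟩
      have ha0 : a = 0 := by omega
      have hb0 : b = D t := by omega
      rw [hs s, hs t, ← hga, ← hgb, ha0, hb0]
    · rw [SimpleGraph.dist_comm, hdist t b a hab ha] at h1
      refine ⟨by omega, fun hD => ?_⟩
      have ha0 : b = 0 := by omega
      have hb0 : a = D t := by omega
      rw [hs s, hs t, ← hga, ← hgb, ha0, hb0, Sym2.eq_swap]
  refine ⟨F, ?_, ?_⟩
  · intro s t h
    have hPP : P s = P t := by
      ext k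
      have h1 := hFe s k
      rw [h, hFe t k] at h1
      by_cases h2 : k ∈ P s <;> by_cases h3 : k ∈ P t <;> simp only [h2, h3, if_true, if_false] at h1 ⊢ <;>
        exact absurd h1 (by decide)
    exact (hP s t hPP).2 (le_antisymm (hP s t hPP).1 (hP t s hPP.symm).1)
  · intro s
    refine ⟨Submodule.sum_mem _ fun k _ => hCW k, ?_, ?_⟩
    · intro h
      have := hFe s (g s 0)
      rw [h, if_pos ((hmemP s _).2 ⟨0, by omega, rfl⟩)] at this
      simp at this
    · intro w hw hw0 hsub
      have hout : ∀ k, k ∉ P s → w (e k) = 0 := by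
        intro k hk
        by_contra h
        exact hsub _ h (by rw [hFe, if_neg hk])
      have hwP : w = ∑ k ∈ P s, w (e k) • C k := by
        conv_lhs => rw [hexp w hw]
        symm
        apply Finset.sum_subset (Finset.subset_univ _)
        intro k _ hk
        rw [hout k hk, zero_smul]
      have hstep : ∀ a < D s, w (e (g s a)) = w (e (g s (a+1))) := by
        intro a ha
        have hadj' := hadj s a ha
        obtain ⟨hne, x, hx1, hx2⟩ := hadj s a ha
        have hother : ∀ k ∈ P s, k ≠ g s a → k ≠ g s (a+1) → C k x = 0 := by
          intro k hk h1 h2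
          by_contra h
          obtain ⟨c, hc, rfl⟩ := (hmemP s k).1 hk
          have a1 : (auxH C).Adj (g s c) (g s a) := ⟨h1, x, h, hx1⟩
          have a2 : (auxH C).Adj (g s c) (g s (a+1)) := ⟨h2, x, h, hx2⟩
          have d1 := SimpleGraph.dist_eq_one_iff_adj.2 a1
          have d2 := SimpleGraph.dist_eq_one_iff_adj.2 a2
          have hca : c ≠ a := fun h => h1 (by rw [h])
          have hca' : c ≠ a + 1 := fun h => h2 (by rw [h])
          rcases lt_or_ge c a with hlt | hge
          · rw [hdist s c (a+1) (by omega) (by omega)] at d2; omega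
          · rw [SimpleGraph.dist_comm, hdist s a c (by omega) (by omega)] at d1; omega
        have hx1' := (zmod2_cases _).resolve_left hx1
        have hx2' := (zmod2_cases _).resolve_left hx2
        have hsum : ∀ f : κ → ZMod 2, ∑ k ∈ P s, f k * C k x = f (g s a) + f (g s (a+1)) := by
          intro f
          rw [Finset.sum_eq_add_of_mem (g s a) (g s (a+1))
            ((hmemP s _).2 ⟨a, by omega, rfl⟩) ((hmemP s _).2 ⟨a+1, by omega, rfl⟩) hne, hx1', hx2']
          · simp
          · intro c hc h
            rw [hother c hc h.1 h.2, mul_zero]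
        have hv : F s x = 0 := by
          have := hsum (fun _ => 1)
          simp only [one_mul] at this
          simp only [F, Finset.sum_apply, this]
          decide
        have hwx : w x = 0 := by
          by_contra h
          exact hsub x h hv
        have h3 : w x = w (e (g s a)) + w (e (g s (a+1))) := by
          have := congrFun hwP x
          rw [Finset.sum_apply] at this
          simp only [Pi.smul_apply, smul_eq_mul] at this
          rw [this, hsum (fun k => w (e k))]
        rw [hwx] at h3
        generalize w (e (g s a)) = p at h3 ⊢
        generalize w (e (g s (a+1))) = q at h3 ⊢
        revert p q
        decide
      have hconst : ∀ a ≤ D s, w (e (g s a)) = w (e (g s 0)) := by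
        intro a
        induction a with
        | zero => simp
        | succ a ih => intro h; rw [← hstep a (by omega), ih (by omega)]
      have h0 : w (e (g s 0)) = 1 := by
        refine (zmod2_cases _).resolve_left fun h => hw0 ?_
        rw [hwP]
        refine Finset.sum_eq_zero fun k hk => ?_
        obtain ⟨c, hc, rfl⟩ := (hmemP s k).1 hk
        rw [hconst c hc, h, zero_smul]
      rw [hwP]
      refine Finset.sum_congr rfl fun k hk => ?_
      obtain ⟨c, hc, rfl⟩ := (hmemP s k).1 hk
      rw [hconst c hc, h0, one_smul]

/-- Connectedness of the intersection graph. -/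
lemma aux_conn {E κ : Type} [Fintype E] [Fintype κ] (W : Submodule (ZMod 2) (E → ZMod 2))
    (e : κ → E) (C : κ → E → ZMod 2) (hCW : ∀ k, C k ∈ W)
    (hC : ∀ k l, C k (e l) = if k = l then 1 else 0)
    (hexp : ∀ w ∈ W, w = ∑ k, w (e k) • C k)
    (hS : ∀ S : Set E, (∀ w ∈ W, (fun x => if x ∈ S then w x else 0) ∈ W) →
      ∀ x y, x ∈ S → y ∈ S) : (auxH C).Preconnected := by
  intro i j
  let A : Finset κ := Finset.univ.filter fun k => (auxH C).Reachable i k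
  have := hS {x | ∃ k ∈ A, C k x ≠ 0} ?_ (e i) (e j) ⟨i, by simp [A], by simp [hC]⟩
  · obtain ⟨k, hk, hne⟩ := this
    rw [hC] at hne
    have : k = j := by by_contra h; simp [h] at hne
    subst this
    simpa [A] using hk
  · intro w hw
    have : (fun x => if x ∈ {x | ∃ k ∈ A, C k x ≠ 0} then w x else 0)
        = ∑ k ∈ A, w (e k) • C k := by
      ext x
      have hx := congrFun (hexp w hw) x
      rw [Finset.sum_apply] at hx ⊢
      split_ifs with h
      · obtain ⟨k, hk, hne⟩ := h
        rw [hx]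
        symm
        apply Finset.sum_subset (Finset.subset_univ _)
        intro l _ hl
        have : C l x = 0 := by
          by_contra h
          apply hl
          have hk' : (auxH C).Reachable i k := by simpa [A] using hk
          by_cases hkl : k = l
          · exact hkl ▸ hk
          · have : (auxH C).Adj k l := ⟨hkl, x, hne, h⟩
            simpa [A] using hk'.trans this.reachable
        simp [this]
      · symm
        refine Finset.sum_eq_zero fun k hk => ?_
        have : C k x = 0 := by
          by_contra h'
          exact h ⟨k, hk, h'⟩
        simp [this]
    have h2 := Submodule.sum_mem W fun k (_ : k ∈ A) => Submodule.smul_mem W (w (e k)) (hCW k)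
    rw [← this] at h2
    convert h2

/-- Boundary map mod 2. -/
noncomputable def auxD {V : Type} [Fintype V] (G : SimpleGraph V) :
    (G.edgeSet → ZMod 2) →ₗ[ZMod 2] (V → ZMod 2) where
  toFun w v := ∑ e : G.edgeSet, if v ∈ e.1 then w e else 0
  map_add' w w' := by
    ext v
    simp only [Pi.add_apply, ← Finset.sum_add_distrib]
    refine Finset.sum_congr rfl fun e _ => ?_
    split_ifs <;> simp
  map_smul' c w := by
    ext v
    simp only [Pi.smul_apply, smul_eq_mul, Finset.mul_sum, RingHom.id_apply]
    refine Finset.sum_congr rfl fun e _ => ?_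
    split_ifs <;> simp

lemma auxD_apply {V : Type} [Fintype V] (G : SimpleGraph V) (w : G.edgeSet → ZMod 2) (v : V) :
    auxD G w v = ∑ e : G.edgeSet, if v ∈ e.1 then w e else 0 := rfl

lemma auxD_sum {V : Type} [Fintype V] (G : SimpleGraph V) (w : G.edgeSet → ZMod 2)
    (K : Finset V) :
    ∑ v ∈ K, auxD G w v = ∑ e : G.edgeSet, ((K.filter (· ∈ e.1)).card : ZMod 2) * w e := by
  simp only [auxD_apply]
  rw [Finset.sum_comm]
  refine Finset.sum_congr rfl fun e _ => ?_
  rw [← Finset.sum_filter, Finset.sum_const, nsmul_eq_mul]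

lemma aux_card_edge {V : Type} (K : Finset V) (a b : V) (hab : a ≠ b) :
    ((K.filter (· ∈ s(a, b))).card : ZMod 2)
      = (if a ∈ K then 1 else 0) + (if b ∈ K then 1 else 0) := by
  have : K.filter (· ∈ s(a, b)) = K.filter (· = a) ∪ K.filter (· = b) := by
    ext x; simp only [Finset.mem_filter, Sym2.mem_iff, Finset.mem_union]; tauto
  rw [this, Finset.card_union_of_disjoint]
  · have h1 : ∀ a, ((K.filter (· = a)).card : ZMod 2) = if a ∈ K then 1 else 0 := by
      intro a
      simp [Finset.card_filter]
    rw [Nat.cast_add, h1, h1]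
  · rw [Finset.disjoint_left]
    intro x hx hx'
    simp only [Finset.mem_filter] at hx hx'
    exact hab (hx.2.symm.trans hx'.2)

lemma aux_dim {V : Type} [Fintype V] [Nonempty V] (G : SimpleGraph V) :
    G.edgeSet.ncard + 1 ≤ Fintype.card V + Module.finrank (ZMod 2) (LinearMap.ker (auxD G)) := by
  have h1 := LinearMap.finrank_range_add_finrank_ker (auxD G)
  have h2 : Module.finrank (ZMod 2) (LinearMap.range (auxD G)) < Fintype.card V := by
    rw [← Module.finrank_fintype_fun_eq_card (ZMod 2)]
    apply Submodule.finrank_lt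
    intro htop
    obtain ⟨v0⟩ := (inferInstance : Nonempty V)
    have : Pi.single v0 (1 : ZMod 2) ∈ LinearMap.range (auxD G) := by rw [htop]; trivial
    obtain ⟨w, hw⟩ := this
    have h := auxD_sum G w Finset.univ
    rw [hw, Finset.sum_eq_zero (s := (Finset.univ : Finset G.edgeSet))] at h
    · simp at h
    · rintro ⟨e, he⟩ _
      induction e using Sym2.ind with
      | _ a b =>
        rw [aux_card_edge _ _ _ (G.ne_of_adj he)]
        simp only [Finset.mem_univ, if_true]
        rw [show (1 : ZMod 2) + 1 = 0 by decide, zero_mul]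
  rw [Module.finrank_fintype_fun_eq_card, ← Nat.card_eq_fintype_card, Nat.card_coe_set_eq] at h1
  omega

/-- Mod 2 edge vector of a walk. -/
noncomputable def auxW {V : Type} {G : SimpleGraph V} {a b : V} (p : G.Walk a b) :
    G.edgeSet → ZMod 2 := fun e => (p.edges.count e.1 : ZMod 2)

lemma auxD_walk {V : Type} [Fintype V] {G : SimpleGraph V} {a b : V} (p : G.Walk a b) (v : V) :
    auxD G (auxW p) v = (if v = a then 1 else 0) + (if v = b then 1 else 0) := by
  induction p with
  | nil =>
    simp only [auxD_apply, auxW, SimpleGraph.Walk.edges_nil, List.count_nil, Nat.cast_zero,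
      ite_self, Finset.sum_const_zero]
    split_ifs <;> decide
  | @cons a c b h p ih =>
    have : auxW (SimpleGraph.Walk.cons h p) = auxW p + Pi.single ⟨s(a, c), h⟩ 1 := by
      ext e
      simp only [auxW, SimpleGraph.Walk.edges_cons, List.count_cons, Pi.add_apply, Pi.single_apply,
        Nat.cast_add, beq_iff_eq, Subtype.ext_iff, eq_comm (a := s(a,c))]
      split_ifs <;> simp
    rw [this, map_add, Pi.add_apply, ih]
    have h2 : auxD G (Pi.single ⟨s(a, c), h⟩ 1) v = (if v = a then 1 else 0) + (if v = c then 1 else 0) := by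
      rw [auxD_apply, Finset.sum_eq_single ⟨s(a, c), h⟩]
      · have := G.ne_of_adj h
        simp only [Sym2.mem_iff, Pi.single_eq_same]
        by_cases h1 : v = a
        · subst h1; simp [this]
        · simp [h1]
      · intro e _ hne
        simp [Pi.single_eq_of_ne hne]
      · simp
    rw [h2]
    generalize (if v = a then (1 : ZMod 2) else 0) = x
    generalize (if v = b then (1 : ZMod 2) else 0) = y
    generalize (if v = c then (1 : ZMod 2) else 0) = z
    revert x y z
    decide

/-- A nonzero even edge set contains a cycle. -/
lemma aux_cycle {V : Type} [Fintype V] {G : SimpleGraph V} (w : G.edgeSet → ZMod 2)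
    (hw : auxD G w = 0) (hw0 : w ≠ 0) :
    ∃ (u : V) (c : G.Walk u u), c.IsCycle ∧
      ∀ e : G.edgeSet, e.1 ∈ c.edges → w e ≠ 0 := by
  let Gw : SimpleGraph V := SimpleGraph.fromEdgeSet {x | ∃ h : x ∈ G.edgeSet, w ⟨x, h⟩ ≠ 0}
  have hadjw : ∀ a b, Gw.Adj a b ↔ ∃ h : s(a, b) ∈ G.edgeSet, w ⟨s(a, b), h⟩ ≠ 0 := by
    intro a b
    simp only [Gw, SimpleGraph.fromEdgeSet_adj, Set.mem_ofPred_eq, and_iff_left_iff_imp]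
    rintro ⟨h, -⟩
    exact G.ne_of_adj h
  have hle : Gw ≤ G := by
    intro a b h
    exact ((hadjw a b).1 h).1
  obtain ⟨⟨e, he⟩, hwe⟩ := Function.ne_iff.1 hw0
  induction e using Sym2.ind with
  | _ a b =>
    have hab : Gw.Adj a b := (hadjw a b).2 ⟨he, hwe⟩
    have hreach : (Gw.deleteEdges {s(a, b)}).Reachable a b := by
      by_contra hnr
      let K : Finset V := Finset.univ.filter fun x => (Gw.deleteEdges {s(a, b)}).Reachable a x
      have hK : ∀ x, x ∈ K ↔ (Gw.deleteEdges {s(a, b)}).Reachable a x := by simp [K]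
      have h := auxD_sum G w K
      rw [hw] at h
      simp only [Pi.zero_apply, Finset.sum_const_zero] at h
      rw [Finset.sum_eq_single ⟨s(a, b), he⟩] at h
      · rw [aux_card_edge _ _ _ (G.ne_of_adj he), if_pos ((hK a).2 (SimpleGraph.Reachable.refl a)),
          if_neg (fun h => hnr ((hK b).1 h))] at h
        simp at h
        exact hwe h.symm
      · rintro ⟨f, hf⟩ _ hne
        induction f using Sym2.ind with
        | _ c d =>
          by_cases hz : w ⟨s(c, d), hf⟩ = 0
          · rw [hz, mul_zero]
          · have hcd : (Gw.deleteEdges {s(a, b)}).Adj c d := by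
              rw [SimpleGraph.deleteEdges_adj]
              refine ⟨(hadjw c d).2 ⟨hf, hz⟩, fun h => hne ?_⟩
              exact Subtype.ext h
            have hiff : c ∈ K ↔ d ∈ K := by
              rw [hK, hK]
              exact ⟨fun h => h.trans hcd.reachable, fun h => h.trans hcd.symm.reachable⟩
            rw [aux_card_edge _ _ _ (G.ne_of_adj hf)]
            simp only [hiff]
            split_ifs
            · rw [show (1 : ZMod 2) + 1 = 0 by decide, zero_mul]
            · simp
      · simp
    obtain ⟨u, p, hp, -⟩ :=
      SimpleGraph.adj_and_reachable_delete_edges_iff_exists_cycle.1 ⟨hab, hreach⟩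
    refine ⟨u, p.mapLe hle, hp.mapLe hle, ?_⟩
    rintro ⟨e, he⟩ hep
    have hep' : e ∈ p.edges := by simpa using hep
    have := p.edges_subset_edgeSet hep'
    induction e using Sym2.ind with
    | _ c d => exact ((hadjw c d).1 this).2

lemma aux_cycle_vec {V : Type} [Fintype V] {G : SimpleGraph V} {u : V} (c : G.Walk u u)
    (hc : c.IsCycle) : auxD G (auxW c) = 0 ∧ auxW c ≠ 0 ∧
      ∀ e : G.edgeSet, auxW c e ≠ 0 ↔ e.1 ∈ c.edges := by
  have h3 : ∀ e : G.edgeSet, auxW c e ≠ 0 ↔ e.1 ∈ c.edges := by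
    intro e
    by_cases h : e.1 ∈ c.edges
    · simp [auxW, List.count_eq_one_of_mem hc.edges_nodup h, h]
    · simp [auxW, List.count_eq_zero_of_not_mem h, h]
  refine ⟨?_, ?_, h3⟩
  · ext v
    rw [auxD_walk, Pi.zero_apply]
    split_ifs <;> decide
  · obtain ⟨e, he⟩ := c.edges.exists_mem_of_ne_nil (by simp [hc.not_nil])
    intro h
    exact (h3 ⟨e, c.edges_subset_edgeSet he⟩).2 he (congrFun h _)

/-- No separators in a 2-connected graph. -/
lemma aux_sep {V : Type} [Fintype V] {G : SimpleGraph V} (hconn : G.Connected)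
    (h2 : ∀ v : V, (G.induce ({v}ᶜ : Set V)).Connected) (S : Set G.edgeSet)
    (hS : ∀ w ∈ LinearMap.ker (auxD G), (fun x => if x ∈ S then w x else 0)
      ∈ LinearMap.ker (auxD G)) (x y : G.edgeSet) (hx : x ∈ S) : y ∈ S := by
  have key : ∀ (v a b : V) (ha : G.Adj v a) (hb : G.Adj v b),
      (⟨s(v, a), ha⟩ : G.edgeSet) ∈ S → (⟨s(v, b), hb⟩ : G.edgeSet) ∈ S := by
    intro v a b ha hb haS
    by_contra hbS
    obtain ⟨p⟩ := (h2 v).preconnected ⟨a, (G.ne_of_adj ha).symm⟩ ⟨b, (G.ne_of_adj hb).symm⟩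
    let q : G.Walk a b := p.map (SimpleGraph.Embedding.induce _).toHom
    have hvq : v ∉ q.support := by
      intro h
      have h' : v ∈ (p.map (SimpleGraph.Embedding.induce ({v}ᶜ : Set V)).toHom).support := h
      rw [SimpleGraph.Walk.support_map, List.mem_map] at h'
      obtain ⟨z, -, hz⟩ := h'
      exact z.2 hz
    let c : G.Walk v v := SimpleGraph.Walk.cons ha (q.append (SimpleGraph.Walk.cons hb.symm .nil))
    have hc : auxW c ∈ LinearMap.ker (auxD G) := by
      rw [LinearMap.mem_ker]
      ext z
      rw [auxD_walk, Pi.zero_apply]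
      exact CharTwo.add_self_eq_zero _
    have h := congrFun (LinearMap.mem_ker.1 (hS _ hc)) v
    have hab : a ≠ b := by
      rintro rfl
      exact hbS haS
    rw [auxD_apply, Finset.sum_eq_single ⟨s(v, a), ha⟩] at h
    · have hq : List.count s(v, a) q.edges = 0 :=
        List.count_eq_zero_of_not_mem fun h => hvq (q.fst_mem_support_of_mem_edges h)
      have hne : s(b, v) ≠ s(v, a) := by
        intro h
        rw [Sym2.eq_iff] at h
        rcases h with ⟨h, -⟩ | ⟨h, -⟩
        · exact G.ne_of_adj hb h.symm
        · exact hab h.symm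
      simp [haS, auxW, c, List.count_cons, List.count_append, hq, hne] at h
    · rintro ⟨f, hf⟩ _ hne
      by_cases hvf : v ∈ f
      · obtain ⟨d, rfl⟩ := hvf
        simp only [Sym2.mem_iff, true_or, if_true]
        by_cases hdS : (⟨s(v, d), hf⟩ : G.edgeSet) ∈ S
        · rw [if_pos hdS]
          have hdb : d ≠ b := by
            rintro rfl
            exact hbS hdS
          have hda : d ≠ a := by
            rintro rfl
            exact hne rfl
          have hq : List.count s(v, d) q.edges = 0 :=
            List.count_eq_zero_of_not_mem fun h => hvq (q.fst_mem_support_of_mem_edges h)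
          have hn1 : s(b, v) ≠ s(v, d) := by
            rw [Sym2.eq_swap]
            intro h
            exact hdb (Sym2.congr_right.1 h).symm
          have hn2 : s(v, a) ≠ s(v, d) := by
            intro h
            exact hda (Sym2.congr_right.1 h).symm
          simp [auxW, c, List.count_cons, List.count_append, hq, hn1, hn2, hda.symm]
        · rw [if_neg hdS]
      · simp [hvf]
    · simp
  have main : ∀ (u v : V) (p : G.Walk u v),
      (∀ (a : V) (ha : G.Adj u a), (⟨s(u, a), ha⟩ : G.edgeSet) ∈ S) →
      (∀ (a : V) (ha : G.Adj v a), (⟨s(v, a), ha⟩ : G.edgeSet) ∈ S) := by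
    intro u v p
    induction p with
    | nil => exact fun h => h
    | @cons u c v h p ih =>
      intro hu
      apply ih
      intro a ha
      refine key c u a h.symm ha ?_
      have h1 := hu c h
      convert h1 using 2
      exact Subtype.ext Sym2.eq_swap
  obtain ⟨x, hx'⟩ := x
  obtain ⟨y, hy'⟩ := y
  induction x using Sym2.ind with
  | _ a b =>
    induction y using Sym2.ind with
    | _ c d =>
      obtain ⟨p⟩ := hconn.preconnected a c
      exact main a c p (fun z hz => key a b z hx' hz hx) d hy'

lemma aux_main {V : Type} [Fintype V] (G : SimpleGraph V) (hconn : G.Connected)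
    (h2 : ∀ v : V, (G.induce ({v}ᶜ : Set V)).Connected)
    (hcyc : ∀ (u v : V) (c₁ : G.Walk u u) (c₂ : G.Walk v v),
      c₁.IsCycle → c₂.IsCycle → c₁.length = c₂.length →
        ∀ e, e ∈ c₁.edges ↔ e ∈ c₂.edges) :
    ∃ r : ℕ, G.edgeSet.ncard + 1 ≤ Fintype.card V + r ∧
      (r + 1).choose 2 ≤ Fintype.card V - 2 := by
  have := hconn.nonempty
  obtain ⟨κ, _, e, C, hcard, hCW, hC, hexp⟩ := aux_echelon (LinearMap.ker (auxD G))
  have hH := aux_conn _ e C hCW hC hexp (fun S hS x y hx => aux_sep hconn h2 S hS x y hx)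
  obtain ⟨F, hFinj, hF⟩ := aux_min _ e C hCW hC hexp hH
  have hcy : ∀ s, ∃ (u : V) (c : G.Walk u u), c.IsCycle ∧ F s = auxW c := by
    intro s
    obtain ⟨hFW, hF0, hmin⟩ := hF s
    obtain ⟨u, c, hc, hsub⟩ := aux_cycle (F s) hFW hF0
    obtain ⟨v1, v2, v3⟩ := aux_cycle_vec c hc
    exact ⟨u, c, hc, (hmin _ v1 v2 fun x hx => hsub x ((v3 x).1 hx)).symm⟩
  choose u c hc hFc using hcy
  refine ⟨Fintype.card κ, ?_, ?_⟩
  · rw [hcard]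
    exact aux_dim G
  · rw [← Sym2.card]
    have : (Finset.univ : Finset (Sym2 κ)).card ≤ (Finset.Icc 3 (Fintype.card V)).card := by
      apply Finset.card_le_card_of_injOn (fun s => (c s).length)
      · intro s _
        have h3 := (hc s).three_le_length
        have h4 : (c s).length ≤ Fintype.card V := by
          have := (hc s).support_nodup.length_le_card
          simpa using this
        simp [h3, h4]
      · intro s _ t _ hst
        apply hFinj
        ext x
        have h1 := hcyc _ _ (c s) (c t) (hc s) (hc t) hst x.1
        rw [← (aux_cycle_vec _ (hc s)).2.2, ← (aux_cycle_vec _ (hc t)).2.2, ← hFc, ← hFc] at h1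
        generalize F s x = p at h1 ⊢
        generalize F t x = q at h1 ⊢
        revert p q
        decide
    simpa using this

end aux

/-- For every integer n ≥ 3, every 2-connected simple graph on n
vertices in which no two cycles have the same length has at most
n + ⌊(√(8n−15)−3)/2⌋ edges.  Here 2-connected means: n ≥ 3, G is connected, and
G remains connected after deleting any single vertex. -/
theorem stmt_2 (n : ℕ) (hn : 3 ≤ n) (G : SimpleGraph (Fin n))
    (hconn : G.Connected)
    (h2conn : ∀ v : Fin n, (G.induce ({v}ᶜ : Set (Fin n))).Connected)
    (hcyc : ∀ (u v : Fin n) (c₁ : G.Walk u u) (c₂ : G.Walk v v),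
      c₁.IsCycle → c₂.IsCycle → c₁.length = c₂.length →
        c₁.edges.toFinset = c₂.edges.toFinset) :
    G.edgeSet.ncard ≤ n + ⌊(Real.sqrt (8 * n - 15) - 3) / 2⌋₊ := by
  obtain ⟨r, hr1, hr2⟩ := aux_main G hconn h2conn (by
    intro u v c₁ c₂ h1 h2 h e
    have := hcyc u v c₁ c₂ h1 h2 h
    rw [← List.mem_toFinset, this, List.mem_toFinset])
  rw [Fintype.card_fin] at hr1 hr2
  have h3 : (r + 1) * r ≤ 2 * (n - 2) := by
    have h4 := Nat.choose_two_right (r + 1)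
    rw [Nat.add_sub_cancel] at h4
    have h5 : 2 ∣ (r + 1) * r := by
      rw [mul_comm]; exact (Nat.even_mul_succ_self r).two_dvd
    omega
  suffices h : r - 1 ≤ ⌊(Real.sqrt (8 * n - 15) - 3) / 2⌋₊ by omega
  rcases Nat.eq_zero_or_pos r with h0 | hpos
  · simp [h0]
  · apply Nat.le_floor
    obtain ⟨k, rfl⟩ : ∃ k, r = k + 1 := ⟨r - 1, by omega⟩
    obtain ⟨m, rfl⟩ : ∃ m, n = m + 2 := ⟨n - 2, by omega⟩
    simp only [Nat.add_sub_cancel] at h3 ⊢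
    have h3' : ((k : ℝ) + 1 + 1) * (k + 1) ≤ 2 * m := by exact_mod_cast h3
    have : (2 * (k : ℝ) + 3) ≤ Real.sqrt (8 * ((m + 2 : ℕ) : ℝ) - 15) := by
      apply Real.le_sqrt_of_sq_le
      push_cast
      nlinarith
    linarith
end

section
/- There is a constant c > 0 such that for every k ≥ 2 and every n, every simple graph on n vertices with more than c·k·n^{1+1/k} edges contains a cycle of length exactly 2k. -/
theorem bs_sum_insert {V : Type*} [DecidableEq V] (R : V → V → Prop) [∀ a, DecidablePred (R a)] (hs : ∀ a b, R a b → R b a)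
    (hi : ∀ a, ¬ R a a) (S : Finset V) (v : V) (hv : v ∉ S) :
    ∑ a ∈ insert v S, ((insert v S).filter (R a)).card
      = ∑ a ∈ S, (S.filter (R a)).card + 2 * (S.filter (R v)).card := by
  have hsym : ∀ a, R a v ↔ R v a := fun a => ⟨hs _ _, hs _ _⟩
  simp only [Finset.card_filter]
  rw [Finset.sum_insert hv, Finset.sum_insert hv]
  have : ∀ a ∈ S, (∑ b ∈ insert v S, if R a b then 1 else 0)
      = (if R v a then 1 else 0) + ∑ b ∈ S, if R a b then 1 else 0 := by
    intro a _
    rw [Finset.sum_insert hv]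
    simp only [hsym]
  rw [Finset.sum_congr rfl this, Finset.sum_add_distrib]
  simp only [hi, if_false]
  ring

open Classical in
theorem bs_min_degree {V : Type*} (R : V → V → Prop) [∀ a, DecidablePred (R a)] (hs : ∀ a b, R a b → R b a)
    (hi : ∀ a, ¬ R a a) (d : ℝ) (S : Finset V)
    (h : 2 * d * S.card < ((∑ a ∈ S, (S.filter (R a)).card : ℕ) : ℝ)) :
    ∃ T ⊆ S, T.Nonempty ∧ ∀ v ∈ T, d < ((T.filter (R v)).card : ℝ) := by
  induction S using Finset.strongInduction with
  | H S ih =>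
    by_cases hall : ∀ v ∈ S, d < ((S.filter (R v)).card : ℝ)
    · refine ⟨S, subset_rfl, ?_, hall⟩
      by_contra hne
      rw [Finset.not_nonempty_iff_eq_empty] at hne
      subst hne
      simp at h
    · push Not at hall
      obtain ⟨v, hv, hd⟩ := hall
      have hss : S.erase v ⊂ S := Finset.erase_ssubset hv
      have key := bs_sum_insert R hs hi (S.erase v) v (Finset.notMem_erase v S)
      rw [Finset.insert_erase hv] at key
      have hf : (S.erase v).filter (R v) = S.filter (R v) := by
        ext a
        simp only [Finset.mem_filter, Finset.mem_erase]
        constructor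
        · rintro ⟨⟨_, h1⟩, h2⟩; exact ⟨h1, h2⟩
        · rintro ⟨h1, h2⟩
          refine ⟨⟨?_, h1⟩, h2⟩
          rintro rfl; exact hi _ h2
      rw [hf] at key
      have hc : (S.card : ℝ) = (S.erase v).card + 1 := by
        rw [← Finset.card_erase_add_one hv]; push_cast; ring
      obtain ⟨T, hT, h2⟩ := ih _ hss (by
        rw [key] at h; push_cast at h ⊢; rw [hc] at h; nlinarith)
      exact ⟨T, hT.trans hss.subset, h2⟩

open Classical in
theorem bs_max_cut {V : Type*} (R : V → V → Prop) (hs : ∀ a b, R a b → R b a)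
    (hi : ∀ a, ¬ R a a) (S : Finset V) :
    ∃ f : V → Bool, ∑ a ∈ S, (S.filter (R a)).card
      ≤ 2 * ∑ a ∈ S, (S.filter (fun b => R a b ∧ f a ≠ f b)).card := by
  induction S using Finset.induction_on with
  | empty => exact ⟨fun _ => true, by simp⟩
  | insert v S hv ih =>
    obtain ⟨f, hf⟩ := ih
    have hsplit : ∀ b : Bool, (S.filter (R v)).card =
        (S.filter (fun u => R v u ∧ b ≠ f u)).card + (S.filter (fun u => R v u ∧ (!b) ≠ f u)).card := by
      intro b
      rw [← Finset.card_filter_add_card_filter_not (s := S.filter (R v)) (fun u => b ≠ f u)]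
      rw [Finset.filter_filter, Finset.filter_filter]
      congr 2
      ext u
      simp only [Finset.mem_filter]
      cases b <;> cases f u <;> simp
    obtain ⟨b, hb⟩ : ∃ b : Bool, (S.filter (R v)).card ≤
        2 * (S.filter (fun u => R v u ∧ b ≠ f u)).card := by
      by_contra hcon
      push Not at hcon
      have h1 := hcon true
      have h2 := hcon false
      have h3 := hsplit true
      simp only [Bool.not_true] at h3
      omega
    refine ⟨Function.update f v b, ?_⟩
    rw [bs_sum_insert R hs hi S v hv,
      bs_sum_insert (fun a c => R a c ∧ Function.update f v b a ≠ Function.update f v b c)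
        (fun a c h => ⟨hs _ _ h.1, h.2.symm⟩) (fun a h => hi _ h.1) S v hv]
    have e1 : ∑ a ∈ S, (S.filter (fun c => R a c ∧ Function.update f v b a ≠ Function.update f v b c)).card
        = ∑ a ∈ S, (S.filter (fun c => R a c ∧ f a ≠ f c)).card := by
      refine Finset.sum_congr rfl fun a ha => ?_
      congr 1
      refine Finset.filter_congr fun c hc => ?_
      rw [Function.update_of_ne (by rintro rfl; exact hv ha),
        Function.update_of_ne (by rintro rfl; exact hv hc)]
    have e2 : (S.filter (fun c => R v c ∧ Function.update f v b v ≠ Function.update f v b c))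
        = (S.filter (fun c => R v c ∧ b ≠ f c)) := by
      refine Finset.filter_congr fun c hc => ?_
      rw [Function.update_self, Function.update_of_ne (by rintro rfl; exact hv hc)]
    rw [e1, e2]
    omega

/-- `g 0, …, g l` is a path of length `l`. -/
def BsPath {V : Type*} (B : SimpleGraph V) (l : ℕ) (g : ℕ → V) : Prop :=
  (∀ i < l, B.Adj (g i) (g (i+1))) ∧ ∀ i ≤ l, ∀ j ≤ l, g i = g j → i = j

theorem bs_dvd_small {n z : ℤ} (h : n ∣ z) (h1 : -n < z) (h2 : z < n) : z = 0 :=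
  Int.eq_zero_of_abs_lt_dvd h (abs_lt.2 ⟨h1, h2⟩)

theorem bs_path_aux {V : Type*} (B : SimpleGraph V) (c : ℤ → V) (n r : ℤ) (l : ℕ)
    (hc : ∀ i j, c i = c j ↔ n ∣ i - j) (hadj : ∀ i, B.Adj (c i) (c (i+1)))
    (hch : B.Adj (c 0) (c r)) (hl : 1 ≤ l) (hr : 0 < r) (hrl : r + l ≤ n)
    (χ : V → Prop) (hχ : ∀ g, BsPath B l g → (∀ i, ∃ z, g i = c z) → (χ (g 0) ↔ χ (g l))) (z : ℤ) :
    χ (c (z + (r - 1))) ↔ χ (c z) := by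
  have per : Function.Periodic (fun z => χ (c z)) (l : ℤ) := by
    intro z
    have := hχ (fun i => c (z + i)) ⟨fun i _ => by
      have := hadj (z + i); simpa [add_assoc] using this, fun i hi j hj h => by
      have h := (hc _ _).1 h
      have := bs_dvd_small h (by omega) (by omega)
      omega⟩ (fun i => ⟨_, rfl⟩)
    simp only [Nat.cast_zero, add_zero] at this
    exact propext this.symm
  have per' : ∀ m z : ℤ, χ (c (z + m * l)) ↔ χ (c z) := fun m z => by
    have := per.int_mul m z
    simpa using this
  have step : ∀ j : ℕ, j < l → (χ (c (-j)) ↔ χ (c (r - 1 - j))) := by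
    intro j hj
    have := hχ (fun i => if i ≤ j then c ((i:ℤ) - j) else c (r + i - j - 1)) ⟨?_, ?_⟩
      (fun i => by split_ifs <;> exact ⟨_, rfl⟩)
    · simp only [Nat.zero_le, if_true, if_neg (not_le.2 hj)] at this
      have h2 := per' 1 (r - 1 - j)
      rw [show r - 1 - j + 1 * (l:ℤ) = r + l - j - 1 by ring] at h2
      rw [← h2, ← this]
      simp
    · intro i hi
      dsimp only
      rcases lt_trichotomy i j with h | h | h
      · rw [if_pos h.le, if_pos (by omega)]
        have := hadj ((i:ℤ) - j)
        convert this using 2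
        push_cast; ring
      · subst h
        rw [if_pos le_rfl, if_neg (by omega)]
        convert hch using 2
        · ring
        · push_cast; ring
      · rw [if_neg (by omega), if_neg (by omega)]
        have := hadj (r + i - j - 1)
        convert this using 2
        push_cast; ring
    · intro i hi i' hi' h
      dsimp only at h
      split_ifs at h with h1 h2 h2
      · have := bs_dvd_small ((hc _ _).1 h) (by omega) (by omega)
        omega
      · have := bs_dvd_small ((hc _ _).1 h) (by omega) (by omega)
        omega
      · have := bs_dvd_small ((hc _ _).1 h) (by omega) (by omega)
        omega
      · have := bs_dvd_small ((hc _ _).1 h) (by omega) (by omega)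
        omega
  have hl0 : (0:ℤ) < l := by omega
  have hj0 := Int.emod_nonneg (-z) hl0.ne'
  have hj1 := Int.emod_lt_of_pos (-z) hl0
  have hdm := Int.emod_add_mul_ediv (-z) l
  obtain ⟨j, hj⟩ := Int.eq_ofNat_of_zero_le hj0
  have hs := step j (by omega)
  have h1 := per' (-(-z / l)) (-j)
  have h2 := per' (-(-z / l)) (r - 1 - j)
  rw [show -(j:ℤ) + -(-z / l) * l = z by rw [← hj]; linarith] at h1
  rw [show r - 1 - (j:ℤ) + -(-z / l) * l = z + (r - 1) by rw [← hj]; linarith] at h2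
  rw [h1, h2, hs]

theorem bs_path {V : Type*} (B : SimpleGraph V) (c : ℤ → V) (n r : ℤ) (l : ℕ)
    (hc : ∀ i j, c i = c j ↔ n ∣ i - j) (hadj : ∀ i, B.Adj (c i) (c (i+1)))
    (hch : B.Adj (c 0) (c r)) (hl : 1 ≤ l) (hr : l ≤ r) (hrl : r + l ≤ n)
    (χ : V → Prop) (hχ : ∀ g, BsPath B l g → (∀ i, ∃ z, g i = c z) → (χ (g 0) ↔ χ (g l))) (z : ℤ) :
    χ (c (z + 2)) ↔ χ (c z) := by
  have h1 := bs_path_aux B c n r l hc hadj hch hl (by omega) hrl χ hχ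
  have hper : ∀ z, c (z + n) = c z := fun z => (hc _ _).2 (by simp)
  have h2 := bs_path_aux B (fun z => c (-z)) n (n - r) l
    (fun i j => by
      rw [hc, ← Int.dvd_neg]
      ring_nf)
    (fun i => by
      have := (hadj (-(i+1))).symm
      simpa using this)
    (by
      have := hper (-(n-r))
      rw [show -(n-r) + n = r by ring] at this
      simp only [neg_zero]
      rw [← this]; exact hch) hl (by omega) (by omega) χ
    (fun g h1 h2 => hχ g h1 fun i => (h2 i).elim fun z hz => ⟨_, hz⟩)
  have h3 := h1 (z + 2)
  have h4 := h2 (-z)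
  simp only [neg_neg] at h4
  rw [← hper] at h4
  rw [← h3, ← h4]
  ring_nf

theorem bs_cycle_of_fun {V : Type*} (G : SimpleGraph V) (m : ℕ) (hm : 2 < m) (f : ℕ → V)
    (hadj : ∀ i, i + 1 < m → G.Adj (f i) (f (i+1))) (hlast : G.Adj (f (m-1)) (f 0))
    (hinj : ∀ i < m, ∀ j < m, f i = f j → i = j) :
    ∃ (v : V) (w : G.Walk v v), w.IsCycle ∧ w.length = m := by
  rw [← SimpleGraph.cycleGraph_isContained_iff hm]
  refine ⟨⟨⟨fun i => f i.val, ?_⟩, ?_⟩⟩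
  · have key : ∀ x y : Fin m, (x - y).val = 1 → G.Adj (f y.val) (f x.val) := by
      intro x y h
      have hx := x.2
      have hy := y.2
      by_cases hle : y ≤ x
      · rw [Fin.sub_val_of_le hle] at h
        have h2 : y.val ≤ x.val := hle
        have : x.val = y.val + 1 := by omega
        rw [this]
        exact hadj _ (by omega)
      · rw [Fin.coe_sub_iff_lt.mpr (not_le.1 hle)] at h
        have h1 : y.val = m - 1 := by omega
        have h2 : x.val = 0 := by omega
        rw [h1, h2]; exact hlast
    intro x y hxy
    rcases SimpleGraph.cycleGraph_adj'.mp hxy with h | h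
    · exact (key _ _ h).symm
    · exact key _ _ h
  · intro x y h
    exact Fin.ext (hinj _ x.2 _ y.2 h)

open Classical in
theorem bs_theta {V : Type*} (B : SimpleGraph V) [∀ v, DecidablePred (B.Adj v)] (T : Finset V) (hT : T.Nonempty) (k : ℕ)
    (hk : 2 ≤ k)
    (h : ∀ v ∈ T, 6 * k < (T.filter (B.Adj v)).card) :
    ∃ (c : ℤ → V) (n r : ℤ), (∀ i j, c i = c j ↔ n ∣ i - j) ∧ (∀ i, B.Adj (c i) (c (i+1))) ∧
      B.Adj (c 0) (c r) ∧ 2 * k ≤ r ∧ r + 2 * k ≤ n := by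
  set Q : ℕ → Prop := fun l => ∃ g, BsPath B l g ∧ ∀ i ≤ l, g i ∈ T with hQ
  have hQ0 : Q 0 := by
    obtain ⟨v, hv⟩ := hT
    exact ⟨fun _ => v, ⟨by simp, by intro i hi j hj _; omega⟩, fun _ _ => hv⟩
  have hbd : ∀ l, Q l → l ≤ T.card := by
    rintro l ⟨g, hg, hgT⟩
    have : (Finset.range (l+1)).card ≤ T.card :=
      Finset.card_le_card_of_injOn g (fun i hi => hgT i (by simp at hi; omega))
        (fun i hi j hj hij => hg.2 i (by simp at hi; omega) j (by simp at hj; omega) hij)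
    simp at this; omega
  set l := Nat.findGreatest Q T.card with hl
  obtain ⟨g, hg, hgT⟩ : Q l := Nat.findGreatest_spec (Nat.zero_le _) hQ0
  have hmax : ¬ Q (l+1) := fun hq => by
    have := Nat.le_findGreatest (hbd _ hq) hq
    omega
  have hnb : ∀ w ∈ T, B.Adj (g 0) w → ∃ i ≤ l, g i = w := by
    intro w hw hadj
    by_contra hcon
    push Not at hcon
    apply hmax
    refine ⟨fun i => if i = 0 then w else g (i-1), ⟨?_, ?_⟩, ?_⟩
    · intro i hi
      rcases i with _ | i
      · simpa using hadj.symm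
      · simpa using hg.1 i (by omega)
    · intro i hi j hj hij
      rcases i with _ | i <;> rcases j with _ | j
      · rfl
      · simp at hij; exact absurd hij.symm (hcon _ (by omega))
      · simp at hij; exact absurd hij (hcon _ (by omega))
      · simp at hij; rw [hg.2 i (by omega) j (by omega) hij]
    · intro i hi
      rcases i with _ | i
      · simpa using hw
      · simpa using hgT i (by omega)
  set I := (Finset.range (l+1)).filter (fun i => B.Adj (g 0) (g i)) with hI
  have hIc : 6 * k < I.card := by
    refine (h (g 0) (hgT 0 (Nat.zero_le _))).trans_le ?_
    refine (Finset.card_le_card ?_).trans (Finset.card_image_le (s := I) (f := g))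
    intro w hw
    rw [Finset.mem_filter] at hw
    obtain ⟨i, hi, rfl⟩ := hnb w hw.1 hw.2
    exact Finset.mem_image_of_mem _ (by simp [hI]; exact ⟨by omega, hw.2⟩)
  have hIne : I.Nonempty := Finset.card_pos.1 (by omega)
  set N := I.max' hIne with hN
  have hNI : N ∈ I := I.max'_mem hIne
  have hNl : N ≤ l ∧ B.Adj (g 0) (g N) := by
    rw [hI, Finset.mem_filter, Finset.mem_range] at hNI
    exact ⟨by omega, hNI.2⟩
  obtain ⟨r, hrI, hr1, hr2⟩ : ∃ r ∈ I, 2 * k ≤ r ∧ r + 2 * k ≤ N + 1 := by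
    by_contra hcon
    push Not at hcon
    have : I ⊆ Finset.range (2*k) ∪ Finset.Icc (N + 2 - 2 * k) N := by
      intro i hi
      have h1 := hcon i hi
      have h2 : i ≤ N := I.le_max' i hi
      simp only [Finset.mem_union, Finset.mem_range, Finset.mem_Icc]
      omega
    have h3 := (Finset.card_le_card this).trans (Finset.card_union_le _ _)
    simp at h3
    omega
  have hrA : B.Adj (g 0) (g r) := (Finset.mem_filter.1 hrI).2
  have hpos : (0:ℤ) < (N:ℤ) + 1 := by omega
  have hm : ∀ z : ℤ, (((z % ((N:ℤ)+1)).toNat : ℕ) : ℤ) = z % ((N:ℤ)+1) := fun z =>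
    Int.toNat_of_nonneg (Int.emod_nonneg _ hpos.ne')
  have hlt : ∀ z : ℤ, (z % ((N:ℤ)+1)).toNat ≤ N := fun z => by
    have := hm z
    have := Int.emod_lt_of_pos z hpos
    omega
  refine ⟨fun z => g (z % ((N:ℤ)+1)).toNat, (N:ℤ)+1, r, ?_, ?_, ?_, by omega, by omega⟩
  · intro i j
    constructor
    · intro hij
      have := hg.2 _ ((hlt i).trans hNl.1) _ ((hlt j).trans hNl.1) hij
      have h1 := hm i
      have h2 := hm j
      exact (Int.emod_eq_emod_iff_emod_sub_eq_zero.1 (by omega : i % ((N:ℤ)+1) = j % ((N:ℤ)+1))) |> Int.dvd_of_emod_eq_zero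
    · intro hd
      have := Int.emod_emod_of_dvd i (dvd_refl ((N:ℤ)+1))
      have : i % ((N:ℤ)+1) = j % ((N:ℤ)+1) :=
        Int.emod_eq_emod_iff_emod_sub_eq_zero.2 (Int.emod_eq_zero_of_dvd hd)
      simp only [this]
  · intro z
    dsimp only
    have h1 := hm z
    have h2 := hlt z
    by_cases hz : (z % ((N:ℤ)+1)).toNat = N
    · have : ((z+1) % ((N:ℤ)+1)) = 0 := by
        rw [Int.add_emod, ← h1, hz]
        rcases Nat.eq_zero_or_pos N with h0 | h0
        · simp [h0]
        · rw [Int.emod_eq_of_lt (a := 1) (by omega) (by omega)]; simp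
      rw [hz, this]
      exact hNl.2.symm
    · have : ((z+1) % ((N:ℤ)+1)) = (((z % ((N:ℤ)+1)).toNat + 1 : ℕ) : ℤ) := by
        rw [Int.add_emod, ← h1, Int.emod_eq_of_lt (a := 1) (by omega) (by omega)]
        rw [Int.emod_eq_of_lt (by omega) (by omega)]
        push_cast; rfl
      rw [this, Int.toNat_natCast]
      exact hg.1 _ (by omega)
  · have h0 : (0 % ((N:ℤ)+1)).toNat = 0 := by simp
    have h1 : ((r:ℤ) % ((N:ℤ)+1)).toNat = r := by
      rw [Int.emod_eq_of_lt (by omega) (by omega)]; simp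
    simp only [h0, h1]
    exact hrA

theorem bs_join {V : Type*} (H : SimpleGraph V) (L : ℕ → Finset V) (lev : V → ℕ)
    (hlev : ∀ i, ∀ v ∈ L i, lev v = i) (p : V → V)
    (hp : ∀ i, ∀ v ∈ L (i+1), p v ∈ L i ∧ H.Adj (p v) v)
    (i l t : ℕ) (hl : 1 ≤ l) (hlt : 2 < l + 2 * t) (ht : 1 ≤ t) (hti : t ≤ i) (g : ℕ → V) (hg : BsPath H l g)
    (hgL : ∀ j ≤ l, g j ∈ L i ∨ g j ∈ L (i+1))
    (ha : g 0 ∈ L i) (hb : g l ∈ L i) (heq : p^[t] (g 0) = p^[t] (g l))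
    (hne : ∀ s < t, p^[s] (g 0) ≠ p^[s] (g l)) :
    ∃ (v : V) (w : H.Walk v v), w.IsCycle ∧ w.length = l + 2 * t := by
  have hit : ∀ v ∈ L i, ∀ s ≤ i, p^[s] v ∈ L (i - s) := by
    intro v hv s
    induction s with
    | zero => intro _; simpa using hv
    | succ s ih =>
      intro hs
      have h1 := ih (by omega)
      rw [show i - s = (i - (s+1)) + 1 by omega] at h1
      rw [Function.iterate_succ_apply']
      exact (hp _ _ h1).1
  have hlv : ∀ v ∈ L i, ∀ s ≤ i, lev (p^[s] v) = i - s := fun v hv s hs => hlev _ _ (hit v hv s hs)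
  have hadj : ∀ v ∈ L i, ∀ s < i, H.Adj (p^[s+1] v) (p^[s] v) := by
    intro v hv s hs
    have h1 := hit v hv s hs.le
    rw [show i - s = (i - (s+1)) + 1 by omega] at h1
    rw [Function.iterate_succ_apply']
    exact (hp _ _ h1).2
  have hglev : ∀ j ≤ l, i ≤ lev (g j) := by
    intro j hj
    rcases hgL j hj with h | h
    · rw [hlev _ _ h]
    · rw [hlev _ _ h]; omega
  set f : ℕ → V := fun j => if j ≤ l then g j else if j ≤ l + t then p^[j-l] (g l)
    else p^[l+2*t-j] (g 0) with hf
  have f1 : ∀ j ≤ l, f j = g j := fun j hj => by simp only [hf, if_pos hj]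
  have f2 : ∀ s ≤ t, f (l + s) = p^[s] (g l) := fun s hs => by
    rcases Nat.eq_zero_or_pos s with h | h
    · subst h; rw [Nat.add_zero, f1 l le_rfl]; rfl
    · simp only [hf]
      rw [if_neg (by omega), if_pos (by omega), Nat.add_sub_cancel_left]
  have f3 : ∀ s ≤ t, 1 ≤ s → f (l + 2 * t - s) = p^[s] (g 0) := fun s hs hs1 => by
    rcases hs.eq_or_lt with h | h
    · subst h
      rw [heq, ← f2 s le_rfl]; congr 1; omega
    · simp only [hf]
      rw [if_neg (by omega), if_neg (by omega)]
      congr 2; omega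
  have hinj : ∀ j1 j2, j1 < j2 → j2 < l + 2 * t → f j1 ≠ f j2 := by
    intro j1 j2 h12 h2 he
    by_cases c2 : j2 ≤ l
    · rw [f1 _ c2, f1 _ (by omega)] at he
      have := hg.2 _ (by omega) _ c2 he
      omega
    by_cases c2' : j2 ≤ l + t
    · obtain ⟨s2, rfl⟩ := Nat.exists_eq_add_of_lt (not_le.1 c2)
      rw [Nat.add_assoc, f2 _ (by omega)] at he
      have v2 := hlv _ hb (s2+1) (by omega)
      by_cases c1 : j1 ≤ l
      · rw [f1 _ c1] at he
        have := hglev j1 c1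
        rw [he] at this; omega
      · obtain ⟨s1, rfl⟩ := Nat.exists_eq_add_of_lt (not_le.1 c1)
        rw [Nat.add_assoc, f2 _ (by omega)] at he
        have v1 := hlv _ hb (s1+1) (by omega)
        rw [he] at v1; omega
    · obtain ⟨s2, hs2, hs2', hs2t⟩ : ∃ s, j2 = l + 2 * t - s ∧ 1 ≤ s ∧ s < t :=
        ⟨l + 2 * t - j2, by omega, by omega, by omega⟩
      rw [hs2, f3 _ hs2t.le hs2'] at he
      have v2 := hlv _ ha s2 (by omega)
      by_cases c1 : j1 ≤ l
      · rw [f1 _ c1] at he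
        have := hglev j1 c1
        rw [he] at this; omega
      by_cases c1' : j1 ≤ l + t
      · obtain ⟨s1, rfl⟩ := Nat.exists_eq_add_of_lt (not_le.1 c1)
        rw [Nat.add_assoc, f2 _ (by omega)] at he
        have v1 := hlv _ hb (s1+1) (by omega)
        rw [he] at v1
        have : s1 + 1 = s2 := by omega
        rw [this] at he
        exact hne s2 hs2t he.symm
      · obtain ⟨s1, hs1, hs1', hs1t⟩ : ∃ s, j1 = l + 2 * t - s ∧ 1 ≤ s ∧ s < t :=
          ⟨l + 2 * t - j1, by omega, by omega, by omega⟩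
        rw [hs1, f3 _ hs1t.le hs1'] at he
        have v1 := hlv _ ha s1 (by omega)
        rw [he] at v1; omega
  refine bs_cycle_of_fun H (l + 2 * t) hlt f ?_ ?_ ?_
  · intro j hj
    by_cases c1 : j < l
    · rw [f1 _ c1.le, f1 _ (by omega)]; exact hg.1 j c1
    by_cases c2 : j < l + t
    · obtain ⟨s, rfl⟩ := Nat.exists_eq_add_of_le (not_lt.1 c1)
      rw [Nat.add_assoc, f2 _ (by omega), f2 _ (by omega)]
      exact (hadj _ hb s (by omega)).symm
    · obtain ⟨s, hs, hs', hst⟩ : ∃ s, j = l + 2 * t - (s + 1) ∧ 1 ≤ s ∧ s + 1 ≤ t :=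
        ⟨l + 2 * t - j - 1, by omega, by omega, by omega⟩
      rw [show j + 1 = l + 2 * t - s by omega, hs, f3 _ hst (by omega), f3 _ (by omega) hs']
      exact hadj _ ha s (by omega)
  · rw [f3 1 ht le_rfl, f1 0 (Nat.zero_le _)]
    exact hadj _ ha 0 (by omega)
  · intro j1 h1 j2 h2 he
    rcases lt_trichotomy j1 j2 with h | h | h
    · exact absurd he (hinj _ _ h h2)
    · exact h
    · exact absurd he.symm (hinj _ _ h h1)

set_option maxHeartbeats 1000000 in
open Classical in
theorem bs_level {V : Type*} (H : SimpleGraph V) (L : ℕ → Finset V) (lev : V → ℕ) (x : V)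
    (hlev : ∀ i, ∀ v ∈ L i, lev v = i) (h0 : L 0 = {x})
    (hpar : ∀ i, ∀ v ∈ L (i+1), ∃ u ∈ L i, H.Adj u v) (k i : ℕ) (hk : 2 ≤ k) (hi : i < k)
    (h : 6 * k * ((L i).card + (L (i+1)).card) <
      ∑ a ∈ L i, ((L (i+1)).filter (H.Adj a)).card) :
    ∃ (v : V) (w : H.Walk v v), w.IsCycle ∧ w.length = 2 * k := by
  obtain ⟨p, hp⟩ : ∃ p : V → V, ∀ i, ∀ v ∈ L (i+1), p v ∈ L i ∧ H.Adj (p v) v := by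
    have : ∀ v, ∃ u, ∀ i, v ∈ L (i+1) → u ∈ L i ∧ H.Adj u v := by
      intro v
      by_cases hv : ∃ i, v ∈ L (i+1)
      · obtain ⟨i, hi⟩ := hv
        obtain ⟨u, hu⟩ := hpar i v hi
        refine ⟨u, fun j hj => ?_⟩
        have h1 := hlev _ _ hi
        have h2 := hlev _ _ hj
        have : i = j := by omega
        exact this ▸ hu
      · exact ⟨v, fun j hj => absurd ⟨j, hj⟩ hv⟩
    choose p hp using this
    exact ⟨p, fun i v hv => hp v i hv⟩
  have hdis : ∀ v, v ∈ L i → v ∈ L (i+1) → False := fun v h1 h2 => by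
    have := hlev _ _ h1
    have := hlev _ _ h2
    omega
  let B : SimpleGraph V :=
    { Adj := fun u v => H.Adj u v ∧ (u ∈ L i ∧ v ∈ L (i+1) ∨ u ∈ L (i+1) ∧ v ∈ L i)
      symm := ⟨fun u v h => ⟨h.1.symm, h.2.symm.imp And.symm And.symm⟩⟩
      loopless := ⟨fun u h => H.loopless.irrefl _ h.1⟩ }
  have hB : ∀ u v, B.Adj u v ↔ H.Adj u v ∧ (u ∈ L i ∧ v ∈ L (i+1) ∨ u ∈ L (i+1) ∧ v ∈ L i) :=
    fun _ _ => Iff.rfl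
  have hdisj : Disjoint (L i) (L (i+1)) := Finset.disjoint_left.2 fun v h1 h2 => hdis v h1 h2
  have hsum : ∑ a ∈ L i ∪ L (i+1), ((L i ∪ L (i+1)).filter (B.Adj a)).card
      = 2 * ∑ a ∈ L i, ((L (i+1)).filter (H.Adj a)).card := by
    rw [Finset.sum_union hdisj]
    have e1 : ∀ a ∈ L i, ((L i ∪ L (i+1)).filter (B.Adj a)).card
        = ((L (i+1)).filter (H.Adj a)).card := by
      intro a ha
      congr 1
      ext b
      simp only [Finset.mem_filter, Finset.mem_union, hB]
      have := hdis a ha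
      tauto
    have e2 : ∀ a ∈ L (i+1), ((L i ∪ L (i+1)).filter (B.Adj a)).card
        = ((L i).filter (fun b => H.Adj b a)).card := by
      intro a ha
      congr 1
      ext b
      simp only [Finset.mem_filter, Finset.mem_union, hB, H.adj_comm b a]
      have := fun h' => hdis a h' ha
      tauto
    rw [Finset.sum_congr rfl e1, Finset.sum_congr rfl e2]
    have := Finset.sum_card_bipartiteAbove_eq_sum_card_bipartiteBelow (s := L i) (t := L (i+1)) H.Adj
    simp only [Finset.bipartiteAbove, Finset.bipartiteBelow] at this
    rw [← this]; ring
  obtain ⟨T, hTS, hTne, hT⟩ := bs_min_degree B.Adj (fun a b h => h.symm)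
    (fun a h => B.loopless.irrefl a h) (6 * k : ℝ) (L i ∪ L (i+1)) (by
      rw [hsum, Finset.card_union_of_disjoint hdisj]
      have : ((6 * k * ((L i).card + (L (i+1)).card) : ℕ) : ℝ) <
        ((∑ a ∈ L i, ((L (i+1)).filter (H.Adj a)).card : ℕ) : ℝ) := by exact_mod_cast h
      push_cast at this ⊢
      linarith)
  obtain ⟨c, n, r, hc, hcadj, hch, hr1, hr2⟩ := bs_theta B T hTne k hk
    (fun v hv => by have := hT v hv; exact_mod_cast this)
  -- alternation
  have hside : ∀ u v, B.Adj u v → (u ∈ L i ↔ ¬ v ∈ L i) := by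
    intro u v huv
    rw [hB] at huv
    have := hdis u
    have := hdis v
    tauto
  have halt2 : ∀ z, c z ∈ L i ↔ c (z + 2) ∈ L i := by
    intro z
    have h1 := hside _ _ (hcadj z)
    have h2 := hside _ _ (hcadj (z+1))
    rw [show z + 1 + 1 = z + 2 by ring] at h2
    tauto
  obtain ⟨j0, hj0⟩ : ∃ j, c j ∈ L i := by
    by_cases h : c 0 ∈ L i
    · exact ⟨0, h⟩
    · refine ⟨1, ?_⟩
      have := hside _ _ (hcadj 0)
      rw [zero_add] at this
      tauto
  -- minimal time of coalescence
  have hex : ∃ t, t ≤ i ∧ ∀ z, c z ∈ L i → p^[t] (c z) = p^[t] (c j0) := by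
    refine ⟨i, le_rfl, fun z hz => ?_⟩
    have : ∀ i, ∀ v ∈ L i, p^[i] v = x := by
      intro i
      induction i with
      | zero => intro v hv; rw [h0] at hv; simpa using hv
      | succ i ih => intro v hv; rw [Function.iterate_succ_apply]; exact ih _ (hp _ _ hv).1
    rw [this _ _ hz, this _ _ hj0]
  set t := Nat.find hex with ht
  obtain ⟨hti, htc⟩ := Nat.find_spec hex
  rw [← ht] at hti htc
  have ht1 : 1 ≤ t := by
    by_contra hcon
    have ht0 : t = 0 := by omega
    rw [ht0] at htc
    have := htc (j0 + 2) ((halt2 j0).1 hj0)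
    have := bs_dvd_small ((hc _ _).1 this) (by omega) (by omega)
    omega
  have hmin : ¬ (∀ z, c z ∈ L i → p^[t-1] (c z) = p^[t-1] (c j0)) := by
    intro hcon
    exact Nat.find_min hex (m := t - 1) (by omega) ⟨by omega, hcon⟩
  set l := 2 * (k - t) with hl
  by_contra hno
  apply hmin
  set χ : V → Prop := fun v => v ∈ L i ∧ p^[t-1] v = p^[t-1] (c j0) with hχ
  have hpar2 := bs_path B c n r l hc hcadj hch (by omega) (by omega) (by omega) χ (by
    intro g hg hgc
    by_contra hcon
    apply hno
    have hgi : ∀ m, 2 * m ≤ l → (g 0 ∈ L i ↔ g (2 * m) ∈ L i) := by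
      intro m
      induction m with
      | zero => intro _; simp
      | succ m ih =>
        intro hm
        have h1 := hside _ _ (hg.1 (2 * m) (by omega))
        have h2 := hside _ _ (hg.1 (2 * m + 1) (by omega))
        rw [show 2 * m + 1 + 1 = 2 * (m + 1) by ring] at h2
        rw [ih (by omega), h1, h2, not_not]
    have hends : g 0 ∈ L i ↔ g l ∈ L i := hgi (k - t) le_rfl
    have ha : g 0 ∈ L i := by
      by_contra h'
      exact hcon ⟨fun q => absurd q.1 h', fun q => absurd (hends.2 q.1) h'⟩
    have hb := hends.1 ha
    have hgne : p^[t-1] (g 0) ≠ p^[t-1] (g l) := by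
      intro he
      apply hcon
      exact ⟨fun q => ⟨hb, he ▸ q.2⟩, fun q => ⟨ha, he.trans q.2⟩⟩
    obtain ⟨z0, hz0⟩ := hgc 0
    obtain ⟨z1, hz1⟩ := hgc l
    have hteq : p^[t] (g 0) = p^[t] (g l) := by
      rw [hz0] at ha ⊢
      rw [hz1] at hb ⊢
      rw [htc _ ha, htc _ hb]
    have := bs_join H L lev hlev p hp i l t (by omega) (by omega) ht1 hti g
      ⟨fun j hj => ((hB _ _).1 (hg.1 j hj)).1, hg.2⟩ ?_ ha hb hteq ?_
    · rwa [show l + 2 * t = 2 * k by omega] at this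
    · intro j hj
      rcases hj.eq_or_lt with h' | h'
      · rw [h']; exact Or.inl hb
      · rcases ((hB _ _).1 (hg.1 j h')).2 with h'' | h''
        · exact Or.inl h''.1
        · exact Or.inr h''.1
    · intro s hs he
      apply hgne
      obtain ⟨u, hu⟩ := Nat.exists_eq_add_of_le (show s ≤ t - 1 by omega)
      rw [hu, Nat.add_comm, Function.iterate_add_apply, Function.iterate_add_apply, he])
  have hperm : ∀ m z : ℤ, χ (c (z + m * 2)) ↔ χ (c z) := by
    intro m z
    have hP : Function.Periodic (fun z => χ (c z)) (2 : ℤ) := fun z => propext (hpar2 z)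
    have := hP.int_mul m z
    simpa using this
  have hpermL : ∀ m z : ℤ, c (z + m * 2) ∈ L i ↔ c z ∈ L i := by
    intro m z
    have hP : Function.Periodic (fun z => c z ∈ L i) (2 : ℤ) := fun z => propext (halt2 z).symm
    have := hP.int_mul m z
    simpa using this
  intro z hz
  have hχ0 : χ (c j0) := ⟨hj0, rfl⟩
  rcases Int.even_or_odd' (z - j0) with ⟨m, hm | hm⟩
  · have := (hperm m j0).2 hχ0
    rw [show j0 + m * 2 = z by omega] at this
    exact this.2
  · have h1 := (hpermL m (j0 + 1))
    rw [show j0 + 1 + m * 2 = z by omega] at h1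
    exact absurd (h1.1 hz) ((hside _ _ (hcadj j0)).1 hj0)

open Classical in
theorem bs_bfs {V : Type*} [Fintype V] (H : SimpleGraph V) (f : V → Bool)
    (hf : ∀ u v, H.Adj u v → f u ≠ f v) (x : V) (d q : ℝ) (k : ℕ) (hk : 2 ≤ k) (hq : 1 ≤ q)
    (T : Finset V) (hx : x ∈ T) (hHT : ∀ u v, H.Adj u v → v ∈ T)
    (hd : d = 30 * k * q)
    (hdeg : ∀ v ∈ T, d < ((T.filter (H.Adj v)).card : ℝ))
    (hn : q ^ k = Fintype.card V) :
    ∃ (v : V) (w : H.Walk v v), w.IsCycle ∧ w.length = 2 * k := by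
  set L : ℕ → Finset V := fun i =>
    Finset.univ.filter (fun v => H.Reachable x v ∧ H.dist x v = i) with hL
  have hmem : ∀ i v, v ∈ L i ↔ H.Reachable x v ∧ H.dist x v = i := fun i v => by simp [hL]
  have hlev : ∀ i, ∀ v ∈ L i, H.dist x v = i := fun i v hv => ((hmem i v).1 hv).2
  have h0 : L 0 = {x} := by
    ext v
    rw [hmem, Finset.mem_singleton]
    constructor
    · rintro ⟨h1, h2⟩
      exact (h1.dist_eq_zero_iff.1 h2).symm
    · rintro rfl; exact ⟨SimpleGraph.Reachable.refl _, by simp⟩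
  have hpar : ∀ i, ∀ v ∈ L (i+1), ∃ u ∈ L i, H.Adj u v := by
    intro i v hv
    obtain ⟨h1, h2⟩ := (hmem _ _).1 hv
    obtain ⟨w, hw⟩ := h1.symm.exists_walk_length_eq_dist
    rw [SimpleGraph.dist_comm, h2] at hw
    cases w with
    | nil => simp at hw
    | @cons _ u _ hadj w =>
      rw [SimpleGraph.Walk.length_cons] at hw
      have hru : H.Reachable x u := ⟨w.reverse⟩
      refine ⟨u, (hmem _ _).2 ⟨hru, ?_⟩, hadj.symm⟩
      have h3 : H.dist x u ≤ w.length := by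
        have := SimpleGraph.dist_le w.reverse; simpa using this
      have h4 := SimpleGraph.Adj.diff_dist_adj (u := x) hadj
      omega
  have hcol : ∀ i, ∃ b, ∀ v ∈ L i, f v = b := by
    intro i
    induction i with
    | zero => exact ⟨f x, fun v hv => by rw [h0, Finset.mem_singleton] at hv; rw [hv]⟩
    | succ i ih =>
      obtain ⟨b, hb⟩ := ih
      refine ⟨!b, fun v hv => ?_⟩
      obtain ⟨u, hu, huv⟩ := hpar i v hv
      have h1 := hf _ _ huv
      rw [hb u hu] at h1
      revert h1
      cases b <;> cases f v <;> simp
  have hLT : ∀ i, ∀ v ∈ L i, v ∈ T := by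
    intro i v hv
    rcases i with _ | i
    · rw [h0, Finset.mem_singleton] at hv; rw [hv]; exact hx
    · obtain ⟨u, _, huv⟩ := hpar i v hv
      exact hHT _ _ huv
  have hnext : ∀ i, ∀ v ∈ L i, ∀ w, H.Adj v w → w ∈ L (i+1) ∨ ∃ j, i = j + 1 ∧ w ∈ L j := by
    intro i v hv w hvw
    obtain ⟨h1, h2⟩ := (hmem _ _).1 hv
    have hrw : H.Reachable x w := h1.trans hvw.reachable
    have hne : w ∉ L i := by
      intro hw
      obtain ⟨b, hb⟩ := hcol i
      exact hf _ _ hvw (by rw [hb _ hv, hb _ hw])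
    have hne' : H.dist x w ≠ i := fun h => hne ((hmem _ _).2 ⟨hrw, h⟩)
    rcases SimpleGraph.Adj.diff_dist_adj (u := x) hvw with h | h | h
    · omega
    · exact Or.inl ((hmem _ _).2 ⟨hrw, by omega⟩)
    · exact Or.inr ⟨i - 1, by omega, (hmem _ _).2 ⟨hrw, by omega⟩⟩
  set e : ℕ → ℕ := fun i => ∑ a ∈ L i, ((L (i+1)).filter (H.Adj a)).card with he
  have he' : ∀ i, ∑ a ∈ L (i+1), ((L i).filter (fun u => H.Adj u a)).card = e i := by
    intro i
    have := Finset.sum_card_bipartiteAbove_eq_sum_card_bipartiteBelow (s := L i) (t := L (i+1)) H.Adj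
    simp only [Finset.bipartiteAbove, Finset.bipartiteBelow] at this
    rw [← this]
  have hd0 : d * (L 0).card ≤ e 0 := by
    have : (L 0).card • d ≤ ∑ a ∈ L 0, (((L 1).filter (H.Adj a)).card : ℝ) := by
      refine Finset.card_nsmul_le_sum _ _ _ fun v hv => ?_
      refine (hdeg v (hLT _ _ hv)).le.trans ?_
      exact_mod_cast Finset.card_le_card (fun w hw => by
        rw [Finset.mem_filter] at hw ⊢
        rcases hnext 0 v hv w hw.2 with h | ⟨j, hj, _⟩
        · exact ⟨h, hw.2⟩
        · omega)
    rw [nsmul_eq_mul] at this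
    simp only [he]
    push_cast
    linarith
  have hd1 : ∀ i, d * (L (i+1)).card ≤ e (i+1) + e i := by
    intro i
    have : (L (i+1)).card • d ≤ ∑ a ∈ L (i+1), ((((L (i+2)).filter (H.Adj a)).card : ℝ) +
        (((L i).filter (fun u => H.Adj u a)).card : ℝ)) := by
      refine Finset.card_nsmul_le_sum _ _ _ fun v hv => ?_
      refine (hdeg v (hLT _ _ hv)).le.trans ?_
      have h1 : T.filter (H.Adj v) ⊆ (L (i+2)).filter (H.Adj v) ∪ (L i).filter (fun u => H.Adj u v) := by
        intro w hw
        rw [Finset.mem_filter] at hw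
        rcases hnext (i+1) v hv w hw.2 with h | ⟨j, hj, h⟩
        · exact Finset.mem_union_left _ (Finset.mem_filter.2 ⟨h, hw.2⟩)
        · have : i = j := by omega
          subst this
          exact Finset.mem_union_right _ (Finset.mem_filter.2 ⟨h, hw.2.symm⟩)
      exact_mod_cast (Finset.card_le_card h1).trans (Finset.card_union_le _ _)
    rw [nsmul_eq_mul, Finset.sum_add_distrib] at this
    rw [← he' i]
    simp only [he]
    push_cast
    linarith
  by_contra hno
  have hup : ∀ i < k, (e i : ℝ) ≤ 6 * k * ((L i).card + (L (i+1)).card) := by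
    intro i hi
    by_contra hcon
    push Not at hcon
    exact hno (bs_level H L (H.dist x) x hlev h0 hpar k i hk hi (by exact_mod_cast hcon))
  have hk0 : (0:ℝ) < 6 * k := by have : 0 < k := by omega
                                 positivity
  have hgrow : ∀ i < k, (q + 1) * (L i).card ≤ (L (i+1)).card := by
    intro i
    induction i with
    | zero =>
      intro hi
      have h1 := hup 0 hi
      have h2 : (6 * k : ℝ) * (5 * q * (L 0).card) ≤ 6 * k * ((L 0).card + (L 1).card) := by
        rw [hd] at hd0; linarith
      have h3 := le_of_mul_le_mul_left h2 hk0
      have h4 : (0:ℝ) ≤ (L 0).card := Nat.cast_nonneg _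
      simp only [zero_add]
      nlinarith
    | succ i ih =>
      intro hi
      have h0' := ih (by omega)
      have h1 := hup i (by omega)
      have h1' := hup (i+1) hi
      have hdi := hd1 i
      have h2 : (6 * k : ℝ) * (5 * q * (L (i+1)).card) ≤
          6 * k * ((L i).card + (L (i+1)).card + ((L (i+1)).card + (L (i+1+1)).card)) := by
        rw [hd] at hdi; linarith
      have h3 := le_of_mul_le_mul_left h2 hk0
      have h4 : (0:ℝ) ≤ (L i).card := Nat.cast_nonneg _
      have h5 : (0:ℝ) ≤ (L (i+1)).card := Nat.cast_nonneg _
      have h6 : ((L i).card : ℝ) ≤ (L (i+1)).card := by nlinarith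
      nlinarith
  have hpow : ∀ i ≤ k, (q + 1) ^ i ≤ ((L i).card : ℝ) := by
    intro i
    induction i with
    | zero => intro _; simp [h0]
    | succ i ih =>
      intro hi
      have h1 := ih (by omega)
      have h2 := hgrow i (by omega)
      rw [pow_succ]
      nlinarith
  have h1 := hpow k le_rfl
  have h2 : ((L k).card : ℝ) ≤ Fintype.card V := by exact_mod_cast Finset.card_le_univ _
  have h3 : q ^ k < (q + 1) ^ k := pow_lt_pow_left₀ (by linarith) (by linarith) (by omega)
  linarith

/-- Bondy–Simonovits: there is a constant c > 0 such that for
every k ≥ 2 and every n, every simple graph on n vertices with more than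
c·k·n^{1+1/k} edges contains a cycle of length exactly 2k. -/
theorem stmt_5 :
    ∃ c : ℝ, 0 < c ∧ ∀ k n : ℕ, 2 ≤ k → ∀ G : SimpleGraph (Fin n),
      c * k * (n : ℝ) ^ (1 + 1 / (k : ℝ)) < (G.edgeSet.ncard : ℝ) →
      ∃ (v : Fin n) (w : G.Walk v v), w.IsCycle ∧ w.length = 2 * k := by
  classical
  refine ⟨60, by norm_num, fun k n hk G hG => ?_⟩
  rcases Nat.eq_zero_or_pos n with hn | hn
  · subst hn
    exfalso
    have h1 : G.edgeSet = ∅ := by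
      ext s
      induction s with
      | _ a b => exact a.elim0
    rw [h1, Set.ncard_empty] at hG
    have : (0:ℝ) ≤ 60 * k * ((0:ℕ) : ℝ) ^ (1 + 1 / (k : ℝ)) := by positivity
    simp only [Nat.cast_zero] at hG this
    linarith
  have hnR : (1:ℝ) ≤ n := by exact_mod_cast hn
  have hkR : (0:ℝ) < k := by have : 0 < k := by omega
                             exact_mod_cast this
  set q : ℝ := (n:ℝ) ^ (1 / (k:ℝ)) with hq
  have hq1 : 1 ≤ q := Real.one_le_rpow hnR (by positivity)
  have hqk : q ^ k = n := by
    rw [hq, one_div]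
    exact Real.rpow_inv_natCast_pow (by linarith) (by omega)
  rw [Real.rpow_add (by linarith), Real.rpow_one, ← hq] at hG
  obtain ⟨f, hf⟩ := bs_max_cut G.Adj (fun a b h => h.symm) (fun a h => G.loopless.irrefl a h)
    Finset.univ
  have hsum : ∑ a, (Finset.univ.filter (G.Adj a)).card = 2 * G.edgeSet.ncard := by
    rw [Set.ncard_eq_toFinset_card' G.edgeSet]
    have := G.sum_degrees_eq_twice_card_edges
    simp only [← SimpleGraph.card_neighborFinset_eq_degree, SimpleGraph.neighborFinset_eq_filter] at this
    convert this using 2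
    simp [SimpleGraph.edgeFinset]
  have hcut : G.edgeSet.ncard ≤ ∑ a, (Finset.univ.filter (fun b => G.Adj a b ∧ f a ≠ f b)).card := by
    have : 2 * G.edgeSet.ncard ≤ 2 * ∑ a, (Finset.univ.filter (fun b => G.Adj a b ∧ f a ≠ f b)).card := by
      rw [← hsum]; convert hf
    omega
  obtain ⟨T, -, ⟨x, hx⟩, hT⟩ := bs_min_degree (fun a b => G.Adj a b ∧ f a ≠ f b)
    (fun a b h => ⟨h.1.symm, h.2.symm⟩) (fun a h => h.2 rfl) (30 * k * q) Finset.univ (by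
      have : (G.edgeSet.ncard : ℝ) ≤ ((∑ a, (Finset.univ.filter (fun b => G.Adj a b ∧ f a ≠ f b)).card : ℕ) : ℝ) := by
        exact_mod_cast hcut
      rw [Finset.card_univ, Fintype.card_fin]
      linarith)
  let H : SimpleGraph (Fin n) :=
    { Adj := fun u v => (G.Adj u v ∧ f u ≠ f v) ∧ u ∈ T ∧ v ∈ T
      symm := ⟨fun u v h => ⟨⟨h.1.1.symm, h.1.2.symm⟩, h.2.symm⟩⟩
      loopless := ⟨fun u h => h.1.2 rfl⟩ }
  have hHG : H ≤ G := fun u v h => h.1.1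
  obtain ⟨v, w, hw, hlen⟩ := bs_bfs H f (fun u v h => h.1.2) x (30 * k * q) q k hk hq1 T hx
    (fun u v h => h.2.2) rfl (fun v hv => by
      refine (hT v hv).trans_le ?_
      refine Nat.cast_le.2 (Finset.card_le_card fun u hu => ?_)
      simp only [Finset.mem_filter] at hu ⊢
      exact ⟨hu.1, hu.2, hv, hu.1⟩) (by rw [hqk, Fintype.card_fin])
  exact ⟨v, w.mapLe hHG, hw.mapLe hHG, by simpa using hlen⟩
end

section
/- Every simple graph on n vertices can be decomposed into at most ⌊n/2⌋ edge-disjoint subgraphs, each of which is a path or a cycle, whose edge sets partition the edge set of the graph. -/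
namespace Lov
open Multiset
set_option linter.unusedSectionVars false
variable {α : Type} [DecidableEq α]

/-- Multiset of edges between consecutive entries of a list. -/
def ed : List α → Multiset (Sym2 α)
  | [] => 0
  | [_] => 0
  | a :: b :: l => s(a, b) ::ₘ ed (b :: l)

@[simp] lemma ed_nil : ed ([] : List α) = 0 := rfl
@[simp] lemma ed_single (a : α) : ed [a] = 0 := rfl
@[simp] lemma ed_cons (a b : α) (l : List α) : ed (a :: b :: l) = s(a, b) ::ₘ ed (b :: l) := rfl

lemma ed_append (l : List α) (a : α) (m : List α) :
    ed (l ++ a :: m) = ed (l ++ [a]) + ed (a :: m) := by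
  induction l with
  | nil => simp
  | cons b l ih =>
    cases l with
    | nil => simp
    | cons c l => simpa using ih

lemma ed_reverse (l : List α) : ed l.reverse = ed l := by
  induction l with
  | nil => rfl
  | cons b l ih =>
    cases l with
    | nil => rfl
    | cons c l =>
      have h : (b :: c :: l).reverse = l.reverse ++ c :: [b] := by simp
      rw [h, ed_append]
      rw [List.reverse_cons] at ih
      rw [ih, ed_cons, ed_cons, ed_single, Sym2.eq_swap, ← Multiset.singleton_add,
        ← Multiset.singleton_add, add_zero, add_comm]

lemma ed_mem_left {l : List α} {e : Sym2 α} (he : e ∈ ed l) {v : α} (hv : v ∈ e) : v ∈ l := by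
  induction l with
  | nil => simp at he
  | cons b l ih =>
    cases l with
    | nil => simp at he
    | cons c l =>
      simp only [ed_cons, Multiset.mem_cons] at he
      rcases he with rfl | he
      · simp at hv ⊢; tauto
      · exact List.mem_cons_of_mem _ (ih he)

lemma ed_parity (v : α) (l : List α) : ∀ (a : α), (∀ e ∈ ed (a :: l), ¬ e.IsDiag) →
    ((ed (a :: l)).countP (fun e => v ∈ e) + (if v = a then 1 else 0)
      + (if v = (a :: l).getLast (by simp) then 1 else 0)) % 2 = 0 := by
  induction l with
  | nil => intro a _; by_cases h : v = a <;> simp [h]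
  | cons b l ih =>
    intro a h
    have h1 := ih b (fun e he => h e (by simp [he]))
    have h2 : a ≠ b := by simpa using h s(a, b) (by simp)
    rw [ed_cons, Multiset.countP_cons, List.getLast_cons (by simp)]
    simp only [Sym2.mem_iff]
    by_cases hva : v = a
    · have : ¬ v = b := by rintro rfl; exact h2 hva.symm
      simp only [hva, true_or, if_true] at *
      simp only [h2, if_false] at h1
      omega
    · simp only [hva, false_or, if_false] at *
      omega

/-- Paths and cycles, as vertex lists. -/
def Good (P : List α) : Prop :=
  P.Nodup ∨ ∃ x m, P = x :: (m ++ [x]) ∧ (m ++ [x]).Nodup ∧ 2 ≤ m.length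

def Tok (D : Multiset (List α)) (P : List α) : Prop := P ∈ D ∨ P.reverse ∈ D

/-- sum of edges -/
def sm (D : Multiset (List α)) : Multiset (Sym2 α) := (D.map ed).sum

@[simp] lemma sm_cons (P : List α) (D) : sm (P ::ₘ D) = ed P + sm D := by simp [sm]
@[simp] lemma sm_zero : sm (0 : Multiset (List α)) = 0 := by simp [sm]

lemma ed_le_sm {D : Multiset (List α)} {P : List α} (h : P ∈ D) : ed P ≤ sm D := by
  obtain ⟨D', rfl⟩ := Multiset.exists_cons_of_mem h
  simp

lemma ed_le_tok {D : Multiset (List α)} {P : List α} (h : Tok D P) : ed P ≤ sm D := by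
  rcases h with h | h
  · exact ed_le_sm h
  · rw [← ed_reverse]; exact ed_le_sm h

lemma good_end (v : α) (P : List α) (hd : ∀ e ∈ ed P, ¬ e.IsDiag) (hP : Good P)
    (ho : (ed P).countP (fun e => v ∈ e) % 2 = 1) :
    P.Nodup ∧ ∃ l, l ≠ [] ∧ (P = v :: l ∨ P.reverse = v :: l) := by
  rcases hP with hP | ⟨x, m, rfl, _⟩
  · refine ⟨hP, ?_⟩
    cases P with
    | nil => simp at ho
    | cons a l =>
      have := ed_parity v l a hd
      have hl : l ≠ [] := by rintro rfl; simp at ho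
      by_cases hva : v = a
      · exact ⟨l, hl, Or.inl (by rw [hva])⟩
      · have hv : v = (a :: l).getLast (by simp) := by
          by_contra hc
          simp only [hva, hc, if_false] at this
          omega
        rw [List.getLast_cons hl] at hv
        refine ⟨l.dropLast.reverse ++ [a], by simp, Or.inr ?_⟩
        conv_lhs => rw [← List.dropLast_append_getLast hl, ← hv]
        simp
  · have := ed_parity v _ x hd
    simp at this
    split_ifs at this <;> omega

lemma exists_end (v : α) (D : Multiset (List α)) (hd : ∀ e ∈ sm D, ¬ e.IsDiag)
    (hD : ∀ P ∈ D, Good P) (ho : (sm D).countP (fun e => v ∈ e) % 2 = 1) :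
    ∃ l, l ≠ [] ∧ (v :: l).Nodup ∧ Tok D (v :: l) := by
  induction D using Multiset.induction with
  | empty => simp at ho
  | cons P D ih =>
    simp only [sm_cons, Multiset.mem_add, Multiset.countP_add] at *
    by_cases h : (ed P).countP (fun e => v ∈ e) % 2 = 1
    · obtain ⟨hn, l, hl, h⟩ := good_end v P (fun e he => hd e (Or.inl he)) (hD P (by simp)) h
      refine ⟨l, hl, ?_⟩
      rcases h with h | h
      · rw [← h]; exact ⟨hn, Or.inl (by simp)⟩
      · rw [← h]; exact ⟨by simpa using hn, Or.inr (by simp)⟩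
    · obtain ⟨l, hl, hn, ht⟩ := ih (fun e he => hd e (Or.inr he))
        (fun Q hQ => hD Q (by simp [hQ])) (by omega)
      exact ⟨l, hl, hn, ht.imp (by simp +contextual) (by simp +contextual)⟩

/-- condition on a token path starting at an unused vertex -/
def Cond (x : α) (U : Finset α) (P : List α) : Prop :=
  x ∉ P ∨ (∃ B, P = B ++ [x]) ∨ ∃ B z C, z ∈ U ∧ P = B ++ z :: x :: C

lemma uniq {x : α} {a b c d : List α} (hn : (a ++ x :: b).Nodup) (h : a ++ x :: b = c ++ x :: d) :
    a = c ∧ b = d := by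
  have hn' := hn
  rw [h] at hn'
  rw [List.nodup_append] at hn hn'
  have h1 : x ∉ a := fun hx => hn.2.2 x hx x (by simp) rfl
  have h2 : x ∉ c := fun hx => hn'.2.2 x hx x (by simp) rfl
  induction a generalizing c with
  | nil => cases c with
    | nil => simpa using h
    | cons e c => simp at h h2; tauto
  | cons e a ih => cases c with
    | nil => simp at h h1; tauto
    | cons f c =>
      simp only [List.cons_append, List.cons.injEq] at h
      obtain ⟨rfl, h⟩ := h
      have := @ih c (by simp_all) h (by simp_all) (by simp_all) (by simp_all)
      simp [this]

lemma chain (x : α) (E : Multiset (Sym2 α)) (hE : E.Nodup) :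
    ∀ (k : ℕ) (U A : Finset α) (D : Multiset (List α)), U.card = k → x ∉ U → A ⊆ U →
    (∀ P ∈ D, Good P) → sm D + A.val.map (fun y => s(x, y)) = E →
    (∀ v ∈ U, ∃ l, (v :: l).Nodup ∧ Tok D (v :: l) ∧ Cond x U (v :: l)) →
    ∃ D' : Multiset (List α), D'.card = D.card ∧ (∀ P ∈ D', Good P) ∧ sm D' = E := by
  intro k
  induction k with
  | zero =>
    intro U A D hk hx hA hD hs _
    rw [Finset.card_eq_zero] at hk
    subst hk
    have : A = ∅ := Finset.subset_empty.mp hA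
    subst this
    exact ⟨D, rfl, hD, by simpa using hs⟩
  | succ k ih =>
    intro U A D hk hx hA hD hs hU
    rcases A.eq_empty_or_nonempty with rfl | ⟨y, hy⟩
    · exact ⟨D, rfl, hD, by simpa using hs⟩
    have hyU := hA hy
    have hyx : y ≠ x := by rintro rfl; exact hx hyU
    obtain ⟨l, hn, ht, hc⟩ := hU y hyU
    -- the edge xy is absent
    have hxy : s(x, y) ∉ sm D := by
      intro hm
      rw [← hs, Multiset.nodup_add] at hE
      exact Multiset.disjoint_left.mp hE.2.2 hm (Multiset.mem_map.mpr ⟨y, hy, rfl⟩)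
    have hxyP : s(x, y) ∉ ed (y :: l) := fun h => hxy (Multiset.mem_of_le (ed_le_tok ht) h)
    obtain ⟨Q, D0, rfl, hQ⟩ : ∃ Q D0, D = Q ::ₘ D0 ∧ (Q = y :: l ∨ Q = (y :: l).reverse) := by
      rcases ht with ht | ht
      · obtain ⟨D0, h⟩ := Multiset.exists_cons_of_mem ht
        exact ⟨_, D0, h, Or.inl rfl⟩
      · obtain ⟨D0, h⟩ := Multiset.exists_cons_of_mem ht
        exact ⟨_, D0, h, Or.inr rfl⟩
    have hQe : ed Q = ed (y :: l) := by
      rcases hQ with rfl | rfl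
      · rfl
      · exact ed_reverse _
    have hD0 : ∀ P ∈ D0, Good P := fun P hP => hD P (by simp [hP])
    have hAv : A.val = y ::ₘ (A.erase y).val := by
      rw [Finset.erase_val, Multiset.cons_erase hy]
    rw [sm_cons, hQe, hAv, Multiset.map_cons] at hs
    have hcard : (U.erase y).card = k := by rw [Finset.card_erase_of_mem hyU, hk]; rfl
    -- reduction of the token condition
    have key : ∀ N : List α,
        (∀ w ∈ U.erase y, ∀ t, (w :: t) = (y :: l).reverse → (w :: t).Nodup → Cond x U (w :: t) →
          ∃ t', (w :: t').Nodup ∧ Tok (N ::ₘ D0) (w :: t') ∧ Cond x (U.erase y) (w :: t')) →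
        ∀ w ∈ U.erase y, ∃ t, (w :: t).Nodup ∧ Tok (N ::ₘ D0) (w :: t) ∧
          Cond x (U.erase y) (w :: t) := by
      intro N hN w hw
      obtain ⟨t, htn, htt, htc⟩ := hU w (Finset.mem_of_mem_erase hw)
      have hwy : w ≠ y := Finset.ne_of_mem_erase hw
      by_cases h0 : Tok D0 (w :: t)
      · refine ⟨t, htn, h0.imp (by simp +contextual) (by simp +contextual), ?_⟩
        rcases htc with h | h | ⟨B, z, C, hz, h⟩
        · exact Or.inl h
        · exact Or.inr (Or.inl h)
        · refine Or.inr (Or.inr ⟨B, z, C, Finset.mem_erase.mpr ⟨?_, hz⟩, h⟩)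
          rintro rfl
          apply hxy
          rw [sm_cons, Multiset.mem_add]
          right
          refine Multiset.mem_of_le (ed_le_tok h0) ?_
          rw [h, ed_append]
          simp [Sym2.eq_swap]
      · have : w :: t = (y :: l).reverse := by
          simp only [Tok, Multiset.mem_cons] at htt h0
          have h1 : w :: t = Q ∨ (w :: t).reverse = Q := by tauto
          rcases h1 with h1 | h1 <;> rcases hQ with hQ | hQ
          · rw [hQ] at h1; simp at h1; tauto
          · rw [h1, hQ]
          · rw [← List.reverse_reverse (w :: t), h1, hQ]
          · rw [hQ] at h1
            have := List.reverse_injective h1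
            simp at this; tauto
        exact hN w hw t this htn htc
    by_cases hxl : x ∉ y :: l
    · -- extend
      obtain ⟨D', h1, h2, h3⟩ := ih (U.erase y) (A.erase y) ((x :: y :: l) ::ₘ D0) hcard
        (fun h => hx (Finset.mem_of_mem_erase h)) (Finset.erase_subset_erase _ hA)
        (by
          intro P hP
          rcases Multiset.mem_cons.mp hP with rfl | hP
          · exact Or.inl (List.nodup_cons.mpr ⟨hxl, hn⟩)
          · exact hD0 P hP)
        (by rw [← hs]; simp only [sm_cons, ed_cons]; simp only [← Multiset.singleton_add]; abel)
        (key _ (by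
          intro w hw t h htn _
          refine ⟨t ++ [x], ?_, Or.inr ?_, Or.inr (Or.inl ⟨w :: t, rfl⟩)⟩
          · rw [← List.cons_append, h]
            have : ((x :: y :: l).reverse).Nodup :=
              List.nodup_reverse.mpr (List.nodup_cons.mpr ⟨hxl, hn⟩)
            rwa [List.reverse_cons] at this
          · rw [← List.cons_append, h]; simp))
      exact ⟨D', by simpa using h1, h2, h3⟩
    rcases hc with hc | ⟨B, hB⟩ | ⟨B, z, C, hz, hB⟩
    · exact absurd hc hxl
    · -- close a cycle
      cases B with
      | nil => simp at hB; exact absurd hB.1 hyx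
      | cons y' B =>
        simp only [List.cons_append, List.cons.injEq] at hB
        obtain ⟨rfl, rfl⟩ := hB
        obtain ⟨D', h1, h2, h3⟩ := ih (U.erase y) (A.erase y) ((x :: ((y :: B) ++ [x])) ::ₘ D0)
          hcard (fun h => hx (Finset.mem_of_mem_erase h)) (Finset.erase_subset_erase _ hA)
          (by
            intro P hP
            rcases Multiset.mem_cons.mp hP with rfl | hP
            · refine Or.inr ⟨x, y :: B, rfl, hn, ?_⟩
              cases B with
              | nil => simp [Sym2.eq_swap] at hxyP
              | cons => simp
            · exact hD0 P hP)
          (by rw [← hs]; simp only [sm_cons, List.cons_append, ed_cons]; simp only [← Multiset.singleton_add]; abel)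
          (key _ (by
            intro w hw t h htn _
            simp at h
            exact absurd (h.1 ▸ Finset.mem_of_mem_erase hw) hx))
        exact ⟨D', by simpa using h1, h2, h3⟩
    · -- rotate
      cases B with
      | nil =>
        simp only [List.nil_append, List.cons.injEq] at hB
        obtain ⟨rfl, rfl⟩ := hB
        simp [Sym2.eq_swap] at hxyP
      | cons y' B =>
        simp only [List.cons_append, List.cons.injEq] at hB
        obtain ⟨rfl, rfl⟩ := hB
        have hyz : z ≠ y := by rintro rfl; simp at hn
        have hzA : z ∉ A := by
          intro hzA
          rw [← hs, Multiset.nodup_add] at hE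
          have h1 : s(x, z) ∈ ed (y :: (B ++ z :: x :: C)) := by
            rw [← List.cons_append, ed_append]; simp [Sym2.eq_swap]
          refine Multiset.disjoint_left.mp hE.2.2 (Multiset.mem_add.mpr (Or.inl h1)) ?_
          refine Multiset.mem_cons_of_mem (Multiset.mem_map.mpr ⟨z, ?_, rfl⟩)
          exact Finset.mem_erase.mpr ⟨hyz, hzA⟩
        have hAv' : (insert z (A.erase y)).val = z ::ₘ (A.erase y).val :=
          Finset.insert_val_of_notMem (fun h => hzA (Finset.mem_of_mem_erase h))
        have hNperm : List.Perm ((y :: (B ++ [z])).reverse ++ x :: C) (y :: (B ++ z :: x :: C)) := by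
          refine (List.Perm.append_right _ (List.reverse_perm _)).trans ?_
          simp
        have hNn : ((y :: (B ++ [z])).reverse ++ x :: C).Nodup := hNperm.nodup_iff.mpr hn
        have e1 : ed (y :: (B ++ z :: x :: C)) = ed (y :: (B ++ [z])) + s(z, x) ::ₘ ed (x :: C) := by
          rw [← List.cons_append, ed_append]; simp
        have e2 : ed ((y :: (B ++ [z])).reverse ++ x :: C)
            = ed (y :: (B ++ [z])) + s(x, y) ::ₘ ed (x :: C) := by
          have : (y :: (B ++ [z])).reverse ++ x :: C = (B ++ [z]).reverse ++ y :: x :: C := by simp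
          rw [this, ed_append, ← List.reverse_cons, ed_reverse, ed_cons, Sym2.eq_swap]
        obtain ⟨D', h1, h2, h3⟩ := ih (U.erase y) (insert z (A.erase y))
          (((y :: (B ++ [z])).reverse ++ x :: C) ::ₘ D0)
          hcard (fun h => hx (Finset.mem_of_mem_erase h))
          (by
            intro a ha
            rcases Finset.mem_insert.mp ha with rfl | ha
            · exact Finset.mem_erase.mpr ⟨hyz, hz⟩
            · exact Finset.erase_subset_erase _ hA ha)
          (by
            intro P hP
            rcases Multiset.mem_cons.mp hP with rfl | hP
            · exact Or.inl hNn
            · exact hD0 P hP)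
          (by
            rw [← hs, hAv', sm_cons, e1, e2, Sym2.eq_swap (a := z)]
            simp only [Multiset.map_cons]; simp only [← Multiset.singleton_add]; abel)
          (key _ (by
            intro w hw t h htn htc
            have hwU := Finset.mem_of_mem_erase hw
            rcases List.eq_nil_or_concat C with rfl | ⟨C1, c, hC⟩
            · simp at h
              exact absurd (h.1 ▸ hwU) hx
            have hwc : w = c := by
              rw [hC] at h; simp at h; exact h.1
            subst hwc
            have hR : ((y :: (B ++ [z])).reverse ++ x :: C).reverse
                = w :: (C1.reverse ++ x :: y :: (B ++ [z])) := by
              rw [hC]; simp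
            refine ⟨C1.reverse ++ x :: y :: (B ++ [z]), ?_, Or.inr ?_, ?_⟩
            · rw [← hR]; exact List.nodup_reverse.mpr hNn
            · rw [← hR, List.reverse_reverse]; simp
            · have hwt : w :: t = C.reverse ++ x :: z :: (B.reverse ++ [y]) := by
                rw [h]; simp
              rcases htc with h' | ⟨B', h'⟩ | ⟨B', z', C', hz', h'⟩
              · rw [hwt] at h'; simp at h'
              · rw [hwt] at h' htn
                have := (uniq htn h').2
                simp at this
              · have hh : C.reverse ++ x :: z :: (B.reverse ++ [y]) = (B' ++ [z']) ++ x :: C' := by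
                  rw [← hwt, h']; simp
                rw [hwt] at htn
                have hCr := (uniq htn hh).1
                refine Or.inr (Or.inr ⟨B', z', y :: (B ++ [z]), Finset.mem_erase.mpr ⟨?_, hz'⟩, ?_⟩)
                · rintro rfl
                  have : z' ∈ C := by
                    rw [← List.mem_reverse, hCr]; simp
                  simp [this] at hn
                · rw [← hR]
                  simp only [List.reverse_append, List.reverse_cons, List.reverse_reverse] at *
                  rw [hCr]; simp))
        exact ⟨D', by simpa using h1, h2, h3⟩

lemma add_star (E : Finset (Sym2 α)) (hE : ∀ e ∈ E, ¬ e.IsDiag) (x : α) (A : Finset α)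
    (hA : ∀ a ∈ A, s(x, a) ∈ E) (D : Multiset (List α)) (hD : ∀ P ∈ D, Good P)
    (hs : sm D = (E \ A.image (fun y => s(x, y))).val)
    (hend : ∀ v, s(x, v) ∈ E → ∃ l, (v :: l).Nodup ∧ Tok D (v :: l)) :
    ∃ D' : Multiset (List α), D'.card = D.card ∧ (∀ P ∈ D', Good P) ∧ sm D' = E.val := by
  have hU : ∀ v, v ∈ (E.biUnion Sym2.toFinset).filter (fun v => s(x, v) ∈ E) ↔ s(x, v) ∈ E := by
    intro v
    rw [Finset.mem_filter, Finset.mem_biUnion]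
    refine ⟨fun h => h.2, fun h => ⟨⟨_, h, by simp⟩, h⟩⟩
  refine chain x E.val E.nodup _ ((E.biUnion Sym2.toFinset).filter (fun v => s(x, v) ∈ E)) A D rfl
    ?_ ?_ hD ?_ ?_
  · rw [hU]; intro h; exact hE _ h (by simp)
  · intro a ha; rw [hU]; exact hA a ha
  · have hinj : Set.InjOn (fun y => s(x, y)) (A : Set α) := by
      intro a _ b _ h; exact Sym2.congr_right.mp h
    rw [hs, Finset.sdiff_val, ← Finset.image_val_of_injOn hinj]
    apply tsub_add_cancel_of_le
    rw [Finset.val_le_iff]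
    intro e he
    obtain ⟨a, ha, rfl⟩ := Finset.mem_image.mp he
    exact hA a ha
  · intro v hv
    rw [hU] at hv
    obtain ⟨l, hl, ht⟩ := hend v hv
    refine ⟨l, hl, ht, ?_⟩
    by_cases hx : x ∈ v :: l
    · obtain ⟨B, C, h⟩ := List.append_of_mem hx
      rcases List.eq_nil_or_concat B with rfl | ⟨B, z, rfl⟩
      · simp at h
        exact absurd (h.1 ▸ hv) (fun h => hE _ h (by simp))
      · refine Or.inr (Or.inr ⟨B, z, C, ?_, by rw [h]; simp⟩)
        rw [hU]
        have h1 : s(x, z) ∈ sm D := by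
          refine Multiset.mem_of_le (ed_le_tok ht) ?_
          rw [h, List.concat_eq_append, List.append_assoc, List.singleton_append, ed_append]
          simp [Sym2.eq_swap]
        rw [hs] at h1
        exact (Finset.mem_sdiff.mp h1).1
    · exact Or.inl hx

/-- degree of `v` in the edge set `E` -/
def dg (E : Finset (Sym2 α)) (v : α) : ℕ := (E.filter (fun e => v ∈ e)).card

lemma dg_count (E : Finset (Sym2 α)) (v : α) : E.val.countP (fun e => v ∈ e) = dg E v := by
  rw [Multiset.countP_eq_card_filter]; rfl

/-- The decomposition claim for the edge set `E` on the vertex set `S`. -/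
def Claim (E : Finset (Sym2 α)) (S : Finset α) : Prop :=
  ∃ D : Multiset (List α), 2 * D.card ≤ S.card ∧ (∀ P ∈ D, Good P) ∧ sm D = E.val

lemma dg_erase (E : Finset (Sym2 α)) {v : α} {e : Sym2 α} (he : e ∈ E) (hv : v ∈ e) :
    dg (E.erase e) v + 1 = dg E v := by
  unfold dg
  rw [Finset.filter_erase, Finset.card_erase_add_one]
  simp [he, hv]

lemma dg_erase' (E : Finset (Sym2 α)) {v : α} {e : Sym2 α} (hv : v ∉ e) :
    dg (E.erase e) v = dg E v := by
  unfold dg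
  rw [Finset.filter_erase, Finset.erase_eq_of_notMem]
  simp [hv]

lemma case1 (E : Finset (Sym2 α)) (S : Finset α) (hE : ∀ e ∈ E, ¬ e.IsDiag)
    (hS : ∀ e ∈ E, ∀ v ∈ e, v ∈ S)
    (ih : ∀ E' : Finset (Sym2 α), E' ⊂ E → Claim E' S)
    (x y : α) (hxy : s(x, y) ∈ E) (hy : Even (dg E y)) : Claim E S := by
  set A := S.filter (fun v => s(x, v) ∈ E ∧ Even (dg E v)) with hAdef
  have hA : ∀ a ∈ A, s(x, a) ∈ E := fun a ha => (Finset.mem_filter.mp ha).2.1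
  have hmA : ∀ a, a ∈ A ↔ s(x, a) ∈ E ∧ Even (dg E a) := by
    intro a
    rw [hAdef, Finset.mem_filter]
    exact ⟨fun h => h.2, fun h => ⟨hS _ h.1 a (by simp), h⟩⟩
  obtain ⟨D, hc, hD, hs⟩ := ih (E \ A.image (fun y => s(x, y))) (by
    refine Finset.sdiff_ssubset ?_ ⟨s(x, y), Finset.mem_image.mpr ⟨y, (hmA y).mpr ⟨hxy, hy⟩, rfl⟩⟩
    intro e he
    obtain ⟨a, ha, rfl⟩ := Finset.mem_image.mp he
    exact hA a ha)
  obtain ⟨D', h1, h2, h3⟩ := add_star E hE x A hA D hD hs (by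
    intro v hv
    have hvx : v ≠ x := by rintro rfl; exact hE _ hv (by simp)
    obtain ⟨l, _, h⟩ := exists_end v D
      (by rw [hs]; exact fun e he => hE e (Finset.mem_sdiff.mp he).1) hD (by
      rw [hs, dg_count]
      by_cases hvA : v ∈ A
      · have : dg (E \ A.image (fun y => s(x, y))) v = dg (E.erase s(x, v)) v := by
          unfold dg
          congr 1
          ext e
          simp only [Finset.mem_filter, Finset.mem_sdiff, Finset.mem_image, Finset.mem_erase]
          constructor
          · rintro ⟨⟨h1, h2⟩, h3⟩
            refine ⟨⟨?_, h1⟩, h3⟩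
            rintro rfl
            exact h2 ⟨v, hvA, rfl⟩
          · rintro ⟨⟨h1, h2⟩, h3⟩
            refine ⟨⟨h2, ?_⟩, h3⟩
            rintro ⟨a, ha, rfl⟩
            rcases Sym2.mem_iff.mp h3 with h | h
            · exact hvx h
            · exact h1 (by rw [h])
        have h2 := dg_erase E hv (show v ∈ s(x, v) by simp)
        have h3 := ((hmA v).mp hvA).2
        rw [Nat.even_iff] at h3
        omega
      · have : dg (E \ A.image (fun y => s(x, y))) v = dg E v := by
          unfold dg
          congr 1
          ext e
          simp only [Finset.mem_filter, Finset.mem_sdiff, Finset.mem_image]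
          constructor
          · rintro ⟨⟨h1, h2⟩, h3⟩
            exact ⟨h1, h3⟩
          · rintro ⟨h2, h3⟩
            refine ⟨⟨h2, ?_⟩, h3⟩
            rintro ⟨a, ha, rfl⟩
            rcases Sym2.mem_iff.mp h3 with h | h
            · exact hvx h
            · exact hvA (h ▸ ha)
        rw [this]
        by_contra hcon
        exact hvA ((hmA v).mpr ⟨hv, by rw [Nat.even_iff]; omega⟩))
    exact ⟨l, h⟩)
  exact ⟨D', by rw [h1]; exact hc, h2, h3⟩

lemma handshake (E : Finset (Sym2 α)) (S : Finset α) (hE : ∀ e ∈ E, ¬ e.IsDiag)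
    (hS : ∀ e ∈ E, ∀ v ∈ e, v ∈ S) : ∑ v ∈ S, dg E v = 2 * E.card := by
  have h := Finset.sum_card_bipartiteAbove_eq_sum_card_bipartiteBelow (s := S) (t := E)
    (fun v e => v ∈ e)
  have h1 : ∀ e ∈ E, (Finset.bipartiteBelow (fun v e => v ∈ e) S e).card = 2 := by
    intro e he
    rw [← Sym2.card_toFinset_of_not_isDiag e (hE e he)]
    congr 1
    ext v
    simp only [Finset.mem_bipartiteBelow, Sym2.mem_toFinset]
    exact ⟨fun h => h.2, fun h => ⟨hS e he v h, h⟩⟩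
  rw [Finset.sum_congr rfl h1] at h
  simp only [Finset.sum_const, smul_eq_mul] at h
  rw [mul_comm, ← h]
  rfl

theorem main [Infinite α] : ∀ (m : ℕ) (E : Finset (Sym2 α)) (S : Finset α), E.card = m →
    (∀ e ∈ E, ¬ e.IsDiag) → (∀ e ∈ E, ∀ v ∈ e, v ∈ S) → Claim E S := by
  intro m
  induction m using Nat.strong_induction_on with
  | _ m ih =>
  intro E S hm hE hS
  by_cases hev : ∃ x y, s(x, y) ∈ E ∧ Even (dg E y)
  · obtain ⟨x, y, hxy, hy⟩ := hev
    refine case1 E S hE hS ?_ x y hxy hy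
    intro E' hE'
    exact ih _ (hm ▸ Finset.card_lt_card hE') E' S rfl (fun e he => hE e (hE'.1 he))
      (fun e he => hS e (hE'.1 he))
  push Not at hev
  have hodd : ∀ e ∈ E, ∀ v ∈ e, dg E v % 2 = 1 := by
    intro e he v hv
    obtain ⟨w, rfl⟩ := hv
    have := hev w v (by rwa [Sym2.eq_swap])
    rwa [Nat.not_even_iff] at this
  rcases E.eq_empty_or_nonempty with rfl | ⟨e, he⟩
  · exact ⟨0, by simp, by simp, by simp⟩
  induction e with | _ x y =>
  have hxy : x ≠ y := by simpa using hE _ he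
  -- pass to the support
  set T := E.biUnion Sym2.toFinset with hT
  have hmT : ∀ v, v ∈ T ↔ ∃ e ∈ E, v ∈ e := by intro v; simp [hT]
  have hTS : T ⊆ S := by
    intro v hv
    obtain ⟨e, he, hv⟩ := (hmT v).mp hv
    exact hS e he v hv
  have hST : ∀ e ∈ E, ∀ v ∈ e, v ∈ T := fun e he v hv => (hmT v).mpr ⟨e, he, hv⟩
  have hTc := Finset.card_le_card hTS
  suffices h : Claim E T by
    obtain ⟨D, h1, h2⟩ := h
    exact ⟨D, h1.trans hTc, h2⟩
  have hTe : T.card % 2 = 0 := by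
    have h1 := handshake E T hE hST
    have h2 : (∑ v ∈ T, dg E v) % 2 = (∑ v ∈ T, 1) % 2 := by
      rw [Finset.sum_nat_mod, Finset.sum_nat_mod T 2 (fun _ => 1)]
      congr 1
      refine Finset.sum_congr rfl fun v hv => ?_
      obtain ⟨e, he, hv⟩ := (hmT v).mp hv
      rw [hodd e he v hv]
    simp at h2
    omega
  have hxT : x ∈ T := hST _ he x (by simp)
  have hyT : y ∈ T := hST _ he y (by simp)
  have hdx := dg_erase E he (show x ∈ s(x, y) by simp)
  have hox := hodd _ he x (by simp)
  by_cases hd : dg E x = 1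
  · -- pendant vertex
    have h0 : dg (E.erase s(x, y)) x = 0 := by omega
    unfold dg at h0
    rw [Finset.card_eq_zero, Finset.filter_eq_empty_iff] at h0
    obtain ⟨D, h1, h2, h3⟩ := ih _ (hm ▸ Finset.card_erase_lt_of_mem he) (E.erase s(x, y))
      (T.erase x) rfl (fun e he => hE e (Finset.mem_of_mem_erase he)) (by
        intro e he v hv
        refine Finset.mem_erase.mpr ⟨?_, hST e (Finset.mem_of_mem_erase he) v hv⟩
        rintro rfl
        exact h0 he hv)
    refine ⟨[x, y] ::ₘ D, ?_, ?_, ?_⟩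
    · rw [Finset.card_erase_of_mem hxT] at h1
      rw [Multiset.card_cons]
      have := Finset.card_pos.mpr ⟨x, hxT⟩
      omega
    · intro P hP
      rcases Multiset.mem_cons.mp hP with rfl | hP
      · exact Or.inl (by simp [hxy])
      · exact h2 P hP
    · rw [sm_cons, h3, Finset.erase_val]
      simp only [ed_cons, ed_single, Multiset.cons_add, zero_add]
      exact Multiset.cons_erase he
  · -- move the edge to a fresh vertex
    obtain ⟨q, hq⟩ := Infinite.exists_notMem_finset T
    have hqE : ∀ e ∈ E, q ∉ e := fun e he hqe => hq (hST e he q hqe)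
    have hqx : q ≠ x := by rintro rfl; exact hq hxT
    have hqy : q ≠ y := by rintro rfl; exact hq hyT
    have hnew : s(q, y) ∉ E.erase s(x, y) := fun h => hqE _ (Finset.mem_of_mem_erase h) (by simp)
    set E1 := insert s(q, y) (E.erase s(x, y)) with hE1
    have hdE1 : ∀ e ∈ E1, ¬ e.IsDiag := by
      intro e he
      rcases Finset.mem_insert.mp he with rfl | he
      · simpa using hqy
      · exact hE e (Finset.mem_of_mem_erase he)
    have hS1 : ∀ e ∈ E1, ∀ v ∈ e, v ∈ insert q T := by
      intro e he v hv
      rcases Finset.mem_insert.mp he with rfl | he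
      · rcases Sym2.mem_iff.mp hv with rfl | rfl
        · simp
        · simp [hyT]
      · exact Finset.mem_insert_of_mem (hST e (Finset.mem_of_mem_erase he) v hv)
    have hc1 : E1.card = E.card := by
      rw [hE1, Finset.card_insert_of_notMem hnew, Finset.card_erase_add_one he]
    have hE1e : E1.erase s(q, y) = E.erase s(x, y) := Finset.erase_insert hnew
    have hdgx : dg E1 x = dg (E.erase s(x, y)) x := by
      rw [← hE1e, dg_erase']
      simp [hqx.symm, hxy]
    obtain ⟨e2, he2⟩ : ((E.erase s(x, y)).filter (fun e => x ∈ e)).Nonempty := by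
      rw [← Finset.card_pos]
      change 0 < dg (E.erase s(x, y)) x
      omega
    obtain ⟨he2, hxe2⟩ := Finset.mem_filter.mp he2
    obtain ⟨u, rfl⟩ := hxe2
    obtain ⟨D, h1, h2, h3⟩ := case1 E1 (insert q T) hdE1 hS1 (by
      intro E' hE'
      exact ih _ (by rw [← hm, ← hc1]; exact Finset.card_lt_card hE') E' _ rfl
        (fun e he => hdE1 e (hE'.1 he)) (fun e he => hS1 e (hE'.1 he)))
      u x (by rw [Sym2.eq_swap]; exact Finset.mem_insert_of_mem he2)
      (by rw [hdgx, Nat.even_iff]; omega)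
    rw [Finset.card_insert_of_notMem hq] at h1
    -- the path ending in q
    have hdq : dg E1 q = 1 := by
      rw [← dg_erase E1 (Finset.mem_insert_self _ _) (show q ∈ s(q, y) by simp), hE1e]
      simp only [Nat.add_eq_right]
      unfold dg
      rw [Finset.card_eq_zero, Finset.filter_eq_empty_iff]
      intro e he
      exact hqE e (Finset.mem_of_mem_erase he)
    obtain ⟨l, hl, hn, ht⟩ := exists_end q D (by rw [h3]; exact hdE1) h2
      (by rw [h3, dg_count, hdq])
    obtain ⟨l, rfl⟩ : ∃ l', l = y :: l' := by
      cases l with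
      | nil => exact absurd rfl hl
      | cons b l =>
        have hb : s(q, b) ∈ E1 := by
          have : s(q, b) ∈ sm D := Multiset.mem_of_le (ed_le_tok ht) (by simp)
          rwa [h3] at this
        rcases Finset.mem_insert.mp hb with h | h
        · have : b = y := Sym2.congr_right.mp h
          exact ⟨l, by rw [this]⟩
        · exact absurd (show q ∈ s(q, b) by simp) (hqE _ (Finset.mem_of_mem_erase h))
    obtain ⟨Q, D0, rfl, hQ⟩ : ∃ Q D0, D = Q ::ₘ D0 ∧ ed Q = ed (q :: y :: l) := by
      rcases ht with ht | ht
      · obtain ⟨D0, h⟩ := Multiset.exists_cons_of_mem ht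
        exact ⟨_, D0, h, rfl⟩
      · obtain ⟨D0, h⟩ := Multiset.exists_cons_of_mem ht
        exact ⟨_, D0, h, ed_reverse _⟩
    have hs : sm ((y :: l) ::ₘ D0) = (E.erase s(x, y)).val := by
      rw [← hE1e, Finset.erase_val, ← h3, sm_cons, sm_cons, hQ, ed_cons, Multiset.cons_add,
        Multiset.erase_cons_head]
    have hg : ∀ P ∈ (y :: l) ::ₘ D0, Good P := by
      intro P hP
      rcases Multiset.mem_cons.mp hP with rfl | hP
      · exact Or.inl (List.nodup_cons.mp hn).2
      · exact h2 P (by simp [hP])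
    obtain ⟨D', g1, g2, g3⟩ := add_star E hE x {y} (by simpa using he) ((y :: l) ::ₘ D0) hg
      (by rw [hs, Finset.image_singleton, Finset.sdiff_singleton_eq_erase]) (by
        intro v hv
        by_cases hvy : v = y
        · subst hvy
          exact ⟨l, (List.nodup_cons.mp hn).2, Or.inl (by simp)⟩
        · have hvx : v ≠ x := by rintro rfl; exact hE _ hv (by simp)
          obtain ⟨t, _, h⟩ := exists_end v ((y :: l) ::ₘ D0)
            (by rw [hs]; exact fun e he => hE e (Finset.mem_of_mem_erase he)) hg
            (by
              rw [hs, dg_count, dg_erase' E (by simp [hvx, hvy])]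
              exact hodd _ hv v (by simp))
          exact ⟨t, h⟩)
    refine ⟨D', ?_, g2, g3⟩
    rw [Multiset.card_cons] at g1 h1
    omega

section transfer
variable {V : Type} (G : SimpleGraph V) (f : V → α)

lemma ed_support {a b : V} (w : G.Walk a b) :
    ed (w.support.map f) = ((w.edges.map (Sym2.map f) : List (Sym2 α)) : Multiset (Sym2 α)) := by
  induction w with
  | nil => simp
  | cons h p ih =>
    cases p with
    | nil => simp
    | cons h' p =>
      simp only [SimpleGraph.Walk.support_cons, SimpleGraph.Walk.edges_cons, List.map_cons,
        ed_cons, Sym2.map_mk] at ih ⊢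
      rw [← Multiset.cons_coe, ← ih]

lemma exists_walk (hf : Function.Injective f) : ∀ (l : List α) (a : V),
    (∀ e ∈ ed (f a :: l), ∃ e' ∈ G.edgeSet, e = Sym2.map f e') →
    ∃ (b : V) (w : G.Walk a b), w.support.map f = f a :: l := by
  intro l
  induction l with
  | nil => intro a _; exact ⟨a, .nil, by simp⟩
  | cons c l ih =>
    intro a h
    obtain ⟨e', he', h'⟩ := h s(f a, c) (by simp)
    have hm : f a ∈ Sym2.map f e' := by rw [← h']; simp
    obtain ⟨a', ha', haa⟩ := Sym2.mem_map.mp hm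
    obtain rfl := hf haa
    obtain ⟨c', rfl⟩ := ha'
    have hc : c = f c' := by
      rw [Sym2.map_mk] at h'
      exact Sym2.congr_right.mp h'
    subst hc
    obtain ⟨b, w, hw⟩ := ih c' (fun e he => h e (by simp [he]))
    have hadj : G.Adj a' c' := he'
    exact ⟨b, .cons hadj w, by rw [SimpleGraph.Walk.support_cons, List.map_cons, hw]⟩

lemma item (hf : Function.Injective f) (P : List α) (hP : Good P)
    (hn : (ed P).Nodup)
    (h : ∀ e ∈ ed P, ∃ e' ∈ G.edgeSet, e = Sym2.map f e') (h0 : ed P ≠ 0) :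
    ∃ p : (Σ (u : V) (v : V), G.Walk u v),
      ((p.2.2.edges.map (Sym2.map f) : List (Sym2 α)) : Multiset (Sym2 α)) = ed P ∧
      (p.2.2.IsPath ∨ ∃ h : p.2.1 = p.1, (p.2.2.copy rfl h).IsCycle) := by
  obtain ⟨a, l, rfl⟩ : ∃ a l, P = f a :: l := by
    match P, h, h0 with
    | [], _, h0 => simp at h0
    | [_], _, h0 => simp at h0
    | c :: d :: l, h, _ =>
      obtain ⟨e', _, h'⟩ := h s(c, d) (by simp)
      have hm : c ∈ Sym2.map f e' := by rw [← h']; simp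
      obtain ⟨a', _, haa⟩ := Sym2.mem_map.mp hm
      exact ⟨a', d :: l, by rw [haa]⟩
  obtain ⟨b, w, hw⟩ := exists_walk G f hf l a h
  have he := ed_support G f w
  rw [hw] at he
  refine ⟨⟨a, b, w⟩, he.symm, ?_⟩
  rcases hP with hP | ⟨x, m, hx, hm, h2⟩
  · left
    rw [SimpleGraph.Walk.isPath_def]
    rw [← hw] at hP
    exact List.Nodup.of_map f hP
  · right
    simp only [List.cons.injEq] at hx
    obtain ⟨rfl, rfl⟩ := hx
    have hlast : f b = f a := by
      have h1 : (w.support.map f).getLast? = some (f b) := by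
        rw [List.getLast?_map, List.getLast?_eq_some_getLast (by simp)]
        simp
      rw [hw] at h1
      have h3 : (f a :: (m ++ [f a])).getLast? = some (f a) := by
        rw [← List.cons_append, List.getLast?_concat]
      rw [h3] at h1
      exact (Option.some.inj h1).symm
    obtain rfl := hf hlast
    refine ⟨rfl, ?_⟩
    change w.IsCycle
    rw [SimpleGraph.Walk.isCycle_def]
    refine ⟨?_, ?_, ?_⟩
    · rw [he, Multiset.coe_nodup] at hn
      exact ⟨List.Nodup.of_map _ hn⟩
    · rintro rfl
      simp at hw
    · have : w.support.tail.map f = m ++ [f b] := by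
        rw [List.map_tail, hw]; rfl
      rw [← this] at hm
      exact List.Nodup.of_map f hm

lemma items (hf : Function.Injective f) (D : Multiset (List α)) (hD : ∀ P ∈ D, Good P)
    (hn : (sm D).Nodup) (h : ∀ e ∈ sm D, ∃ e' ∈ G.edgeSet, e = Sym2.map f e') :
    ∃ L : List (Σ (u : V) (v : V), G.Walk u v), L.length ≤ D.card ∧
      (∀ p ∈ L, p.2.2.IsPath ∨ ∃ h : p.2.1 = p.1, (p.2.2.copy rfl h).IsCycle) ∧
      (((L.flatMap (fun p => p.2.2.edges)).map (Sym2.map f) : List (Sym2 α)) :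
        Multiset (Sym2 α)) = sm D := by
  induction D using Multiset.induction with
  | empty => exact ⟨[], by simp⟩
  | cons P D ih =>
    rw [sm_cons] at hn
    obtain ⟨L, h1, h2, h3⟩ := ih (fun Q hQ => hD Q (by simp [hQ]))
      (Multiset.nodup_add.mp hn).2.1 (fun e he => h e (by simp [he]))
    by_cases h0 : ed P = 0
    · exact ⟨L, by rw [Multiset.card_cons]; omega, h2, by rw [h3, sm_cons, h0, zero_add]⟩
    · obtain ⟨p, hp1, hp2⟩ := item G f hf P (hD P (by simp)) (Multiset.nodup_add.mp hn).1
        (fun e he => h e (by simp [he])) h0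
      refine ⟨p :: L, by simpa using h1, ?_, ?_⟩
      · intro q hq
        rcases List.mem_cons.mp hq with rfl | hq
        · exact hp2
        · exact h2 q hq
      · rw [List.flatMap_cons, List.map_append, ← Multiset.coe_add, hp1, h3, sm_cons]

end transfer
end Lov


/-- Lovász: every simple graph on n vertices can be decomposed
into at most ⌊n/2⌋ edge-disjoint paths and cycles whose edge sets partition the
edge set of the graph. -/
theorem stmt_8 (n : ℕ) (G : SimpleGraph (Fin n)) :
    ∃ L : List (Σ (u : Fin n) (v : Fin n), G.Walk u v),
      L.length ≤ n / 2 ∧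
      (∀ p ∈ L, p.2.2.IsPath ∨ ∃ h : p.2.1 = p.1, (p.2.2.copy rfl h).IsCycle) ∧
      List.Pairwise (fun p q => ∀ e ∈ p.2.2.edges, e ∉ q.2.2.edges) L ∧
      (∀ e : Sym2 (Fin n), e ∈ G.edgeSet ↔ ∃ p ∈ L, e ∈ p.2.2.edges) := by

  classical
  have hf : Function.Injective (fun i : Fin n => (i : ℕ)) := Fin.val_injective
  have hg := Sym2.map.injective hf
  obtain ⟨D, h1, h2, h3⟩ := Lov.main _ (G.edgeFinset.image (Sym2.map (fun i : Fin n => (i : ℕ))))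
    (Finset.range n) rfl
    (by
      intro e he
      obtain ⟨e', he', rfl⟩ := Finset.mem_image.mp he
      rw [Sym2.isDiag_map hf]
      exact G.not_isDiag_of_mem_edgeFinset he')
    (by
      intro e he v hv
      obtain ⟨e', he', rfl⟩ := Finset.mem_image.mp he
      obtain ⟨i, _, rfl⟩ := Sym2.mem_map.mp hv
      simp)
  have hmem : ∀ e, e ∈ Lov.sm D ↔ ∃ e' ∈ G.edgeSet, e = Sym2.map (fun i : Fin n => (i : ℕ)) e' := by
    intro e
    rw [h3, Finset.mem_val, Finset.mem_image]
    simp only [SimpleGraph.mem_edgeFinset]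
    exact ⟨fun ⟨a, b, c⟩ => ⟨a, b, c.symm⟩, fun ⟨a, b, c⟩ => ⟨a, b, c.symm⟩⟩
  have hnd : (Lov.sm D).Nodup := by rw [h3]; exact Finset.nodup _
  obtain ⟨L, g1, g2, g3⟩ := Lov.items G (fun i : Fin n => (i : ℕ)) hf D h2 hnd
    (fun e he => (hmem e).mp he)
  refine ⟨L, ?_, g2, ?_, ?_⟩
  · rw [Finset.card_range] at h1
    omega
  · rw [← g3, Multiset.coe_nodup] at hnd
    have := List.Nodup.of_map _ hnd
    rw [List.nodup_flatMap] at this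
    exact this.2.imp (fun {p q} h e he he' => h he he')
  · intro e
    have key : Sym2.map (fun i : Fin n => (i : ℕ)) e ∈ Lov.sm D ↔
        ∃ p ∈ L, e ∈ p.2.2.edges := by
      rw [← g3, Multiset.mem_coe, List.mem_map_of_injective hg, List.mem_flatMap]
    rw [← key, hmem]
    constructor
    · intro h; exact ⟨e, h, rfl⟩
    · rintro ⟨e', h, h'⟩
      rwa [hg h']
end
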